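/- Let p ≥ 2 be an integer and η > 0. Let (c_k)_{k≥1} be complex numbers, (φ_k)_{k≥1} real numbers, and γ_k : (0,∞) → ℂ functions, and suppose the potential V(x) = Σ_{k=1}^∞ c_k e^{−iφ_k x} γ_k(x) is real-valued. Assume: (i) sup_k Var(γ_k,(0,∞)) < ∞; (ii) ∫_0^∞ (sup_k |γ_k(x)|)^p dx < ∞; (iii) Σ_{k=1}^∞ |c_k| < ∞; (iv) for every j = 1,…,p−1, Σ_{k_1,…,k_j=1}^∞ |c_{k_1} ⋯ c_{k_j} h_j(η; φ_{k_1},…,φ_{k_j})| < ∞; (v) (nonresonance) Kη ≠ ε_1 φ_{k_1} + ⋯ + ε_J φ_{k_J} for all integers 1 ≤ K ≤ J ≤ p, all indices k_1,…,k_J ≥ 1 and all signs ε_i ∈ {+1,−1}; (vi) the representation is closed under complex conjugation, i.e. there is an involution k ↦ k* of the index set with c_{k*} = conj(c_k), φ_{k*} = −φ_k and γ_{k*} = conj(γ_k). Then every solution of −u'' + V u = (η²/4)·u on (0,∞) is bounded. -/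

import Mathlib

open scoped BigOperators ENNReal
open MeasureTheory

/-- The functions `h_J` of `1+J` real variables (the extra variables in the `ℕ → ℝ`
argument beyond the first `J` are ignored), defined recursively by `h_0(η) = 1` and
`h_J(η;φ_1,…,φ_J) = (η - φ_1 - ⋯ - φ_J)⁻¹ Σ_{j=0}^{J-1} h_j(η;φ_1,…,φ_j) h_{J-j-1}(η;φ_{j+1},…,φ_{J-1})`. -/
noncomputable def hFun : ℕ → ℝ → (ℕ → ℝ) → ℝ
  | 0, _, _ => 1
  | (J+1), η, φ =>
      (η - ∑ i ∈ Finset.range (J+1), φ i)⁻¹ *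
        ∑ j ∈ (Finset.range (J+1)).attach,
          hFun j.1 η φ * hFun (J - j.1) η (fun i => φ (i + j.1))
  termination_by J _ _ => J
  decreasing_by
  · exact Nat.lt_of_lt_of_le (Finset.mem_range.mp j.2) (Nat.le_refl _)
  · exact Nat.lt_succ_of_le (Nat.sub_le J j.1)

/-- Pad a tuple `m : Fin J → ℕ` of indices into a function `ℕ → ℝ` listing `φ_{m_1},…,φ_{m_J}`. -/
noncomputable def padFin (J : ℕ) (φ : ℕ → ℝ) (m : Fin J → ℕ) : ℕ → ℝ :=
  fun n => if h : n < J then φ (m ⟨n, h⟩) else 0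

/-- `u` (with derivative `u'`) is a solution of `-u'' + V u = E u` on `(0,∞)`. -/
def IsWeakSolution (V : ℝ → ℝ) (E : ℝ) (u u' : ℝ → ℂ) : Prop :=
  (∀ x ∈ Set.Ioi (0:ℝ), HasDerivAt u (u' x) x) ∧
  ∀ a b : ℝ, 0 < a → a ≤ b →
    IntervalIntegrable (fun x => (V x : ℂ) * u x - (E : ℂ) * u x) volume a b ∧
    u' b - u' a = ∫ x in a..b, ((V x : ℂ) * u x - (E : ℂ) * u x)

/-!
Let `w` be a complex function with `Im w ≥ β > 0` that solves the Riccati equation `w' + w² = V - E`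
up to an integrable error. Then `‖u' - (Re w) u‖² / Im w + (Im w) ‖u‖²`, conserved for an exact `w`,
is bounded along every solution `u` by Grönwall's inequality, and hence so is `u`.

Near zero `w = iη/2` will do. Near infinity take `w = (iη/2)(2/Q - 1)`, which turns the Riccati
equation into `Q' = -iη(Q - 1) + i(V/η)Q²`. Expand `Q` in powers of the coefficients of `V`. As
`e^{-iφ_k x} γ_k` oscillates with frequency `φ_k` up to the integrable error coming from `γ_k'`, the
term of degree `J` can be solved for by dividing by `η - φ_{k_1} - ⋯ - φ_{k_J}`, and the outcome is
the recursion defining `h_J`. If the series is truncated at degree `p - 1`, only terms of degree at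
least `p` are left over, and these are integrable because the `γ_k` are bounded and uniformly `Lᵖ`.
The `γ_k` need not be differentiable: they are replaced by averages, which are `C¹` and at `L¹`
distance controlled by the variation.
-/

open Set Filter
open scoped Topology NNReal RealInnerProductSpace

section AbsoluteContinuity

variable {E : Type*} [NormedAddCommGroup E] {s t : ℝ}

lemma absolutelyContinuousOnInterval_of_dist_le {X Y : Type*} [PseudoMetricSpace X]
    [PseudoMetricSpace Y] {f : ℝ → X} {g : ℝ → Y} {C : ℝ}
    (hg : AbsolutelyContinuousOnInterval g s t)
    (h : ∀ x ∈ uIcc s t, ∀ y ∈ uIcc s t, dist (f x) (f y) ≤ C * dist (g x) (g y)) :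
    AbsolutelyContinuousOnInterval f s t := by
  have hCg := Tendsto.const_mul C hg
  rw [mul_zero] at hCg
  refine squeeze_zero' (.of_forall fun I => Finset.sum_nonneg fun _ _ => dist_nonneg) ?_ hCg
  filter_upwards [mem_inf_of_right (mem_principal_self _)] with I hI
  rw [Finset.mul_sum]
  exact Finset.sum_le_sum fun i hi => h _ (hI.1 i hi).1 _ (hI.1 i hi).2

lemma absolutelyContinuousOnInterval_of_hasDerivAt [NormedSpace ℝ E] {f f' : ℝ → E}
    (hf : ∀ x ∈ uIcc s t, HasDerivAt f (f' x) x) (hf' : ContinuousOn f' (uIcc s t)) :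
    AbsolutelyContinuousOnInterval f s t := by
  obtain ⟨C, hC⟩ := isCompact_uIcc.exists_bound_of_continuousOn hf'
  refine LipschitzOnWith.absolutelyContinuousOnInterval (K := C.toNNReal) ?_
  refine (convex_uIcc s t).lipschitzOnWith_of_nnnorm_hasDerivWithin_le
    (fun x hx => (hf x hx).hasDerivWithinAt) fun x hx => ?_
  exact NNReal.coe_le_coe.1 ((hC x hx).trans (Real.le_coe_toNNReal C))

lemma absolutelyContinuousOnInterval_norm_sq {f : ℝ → E}
    (hf : AbsolutelyContinuousOnInterval f s t) :
    AbsolutelyContinuousOnInterval (fun x => ‖f x‖ ^ 2) s t := by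
  have h : AbsolutelyContinuousOnInterval (fun x => ‖f x‖) s t :=
    absolutelyContinuousOnInterval_of_dist_le (C := 1) hf fun x _ y _ =>
      (dist_norm_norm_le _ _).trans_eq (by rw [one_mul, dist_eq_norm])
  simpa only [pow_two] using h.fun_mul h

lemma absolutelyContinuousOnInterval_comp_of_locallyLipschitz {f g : ℝ → ℝ}
    (hg : LocallyLipschitz g) (hf : AbsolutelyContinuousOnInterval f s t) :
    AbsolutelyContinuousOnInterval (fun x => g (f x)) s t := by
  obtain ⟨K, hK⟩ := hg.locallyLipschitzOn.exists_lipschitzOnWith_of_compact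
    (isCompact_uIcc.image_of_continuousOn hf.continuousOn)
  exact absolutelyContinuousOnInterval_of_dist_le hf fun x hx y hy =>
    hK.dist_le_mul _ (mem_image_of_mem f hx) _ (mem_image_of_mem f hy)

end AbsoluteContinuity

section Gronwall

variable {G κ : ℝ → ℝ} {s t : ℝ}

lemma le_mul_exp_integral_of_deriv_le (hst : s ≤ t) (hG : AbsolutelyContinuousOnInterval G s t)
    (hκ : IntervalIntegrable κ volume s t)
    (h : ∀ᵐ x, x ∈ Icc s t → deriv G x ≤ κ x * G x) :
    G t ≤ G s * Real.exp (∫ x in s..t, κ x) := by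
  set K : ℝ → ℝ := fun x => ∫ r in s..x, κ r
  have hK := hκ.absolutelyContinuousOnInterval_intervalIntegral (c := s) left_mem_uIcc
  have hexp := absolutelyContinuousOnInterval_comp_of_locallyLipschitz
    (Real.contDiff_exp (n := 1)).locallyLipschitz hK.neg
  set F : ℝ → ℝ := G * fun x => Real.exp (-K x)
  have hF : AbsolutelyContinuousOnInterval F s t := hG.mul hexp
  have hF' : ∀ᵐ x, x ∈ Ioc s t → deriv F x ≤ 0 := by
    filter_upwards [h, hG.ae_differentiableAt, hκ.ae_hasDerivAt_integral] with x hx hGx hκx hxI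
    have hxI' : x ∈ uIcc s t := uIcc_of_le hst ▸ Ioc_subset_Icc_self hxI
    have hKx : HasDerivAt (fun x => Real.exp (-K x)) _ x := (hκx hxI' s left_mem_uIcc).neg.exp
    rw [((hGx hxI').hasDerivAt.mul hKx).deriv]
    have := mul_le_mul_of_nonneg_right (hx (Ioc_subset_Icc_self hxI)) (Real.exp_nonneg (-K x))
    simp only [Pi.neg_apply]
    linarith
  have hFle : F t ≤ F s := by
    rw [← sub_nonpos, ← hF.integral_deriv_eq_sub, intervalIntegral.integral_of_le hst]
    exact setIntegral_nonpos_ae measurableSet_Ioc hF'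
  have hFs : F s = G s := by simp [F, K]
  calc G t = F t * Real.exp (K t) := by simp [F, mul_assoc, ← Real.exp_add]
    _ ≤ G s * Real.exp (K t) := by rw [← hFs]; gcongr

lemma le_mul_exp_integral_of_abs_deriv_le (hG : AbsolutelyContinuousOnInterval G s t)
    (hκ : IntervalIntegrable κ volume s t) (hGs : 0 ≤ G s)
    (h : ∀ᵐ x, x ∈ uIcc s t → |deriv G x| ≤ κ x * G x) :
    G t ≤ G s * Real.exp |∫ x in s..t, κ x| := by
  suffices hle : G t ≤ G s * Real.exp (∫ x in uIoc s t, κ x) from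
    hle.trans <| by
      gcongr
      rw [intervalIntegral.abs_integral_eq_abs_integral_uIoc]
      exact le_abs_self _
  rcases le_total s t with hst | hts
  · rw [uIoc_of_le hst, ← intervalIntegral.integral_of_le hst]
    rw [uIcc_of_le hst] at h
    exact le_mul_exp_integral_of_deriv_le hst hG hκ
      (h.mono fun x hx hxI => (le_abs_self _).trans (hx hxI))
  · rw [uIoc_of_ge hts, ← intervalIntegral.integral_of_le hts]
    rw [uIcc_of_ge hts] at h
    have hneg := le_mul_exp_integral_of_deriv_le hts hG.neg.symm hκ.neg.symm
      (h.mono fun x hx hxI => by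
        rw [deriv.neg, Pi.neg_apply, Pi.neg_apply, neg_mul_neg]
        exact (neg_le_abs _).trans (hx hxI))
    simp only [Pi.neg_apply, intervalIntegral.integral_neg, Real.exp_neg] at hneg
    rwa [neg_mul, neg_le_neg_iff, ← div_eq_mul_inv, div_le_iff₀ (Real.exp_pos _)] at hneg

end Gronwall

section RiccatiEnergy

variable {E : Type*} [NormedAddCommGroup E] [InnerProductSpace ℝ E]

/-- The energy `‖z' - (Re w) z‖² / Im w + (Im w) ‖z‖²` of a solution `z` of `z'' = F z` relative to
a complex function `w`. It is conserved when `w` solves the Riccati equation `w' + w² = F`, that is,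
when `w` is the logarithmic derivative of a complex solution. -/
noncomputable def riccatiEnergy (w : ℂ) (z z' : E) : ℝ :=
  ‖z' - w.re • z‖ ^ 2 / w.im + w.im * ‖z‖ ^ 2

lemma mul_norm_sq_le_riccatiEnergy {w : ℂ} {β : ℝ} (hw : 0 ≤ w.im) (hβ : β ≤ w.im) (z z' : E) :
    β * ‖z‖ ^ 2 ≤ riccatiEnergy w z z' := by
  have h : 0 ≤ ‖z' - w.re • z‖ ^ 2 / w.im := by positivity
  have h' : β * ‖z‖ ^ 2 ≤ w.im * ‖z‖ ^ 2 := by gcongr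
  exact h'.trans (le_add_of_nonneg_left h)

lemma hasDerivAt_riccatiEnergy {w : ℝ → ℂ} {w' : ℂ} {z z' : ℝ → E} {F x : ℝ}
    (hw : HasDerivAt w w' x) (hz : HasDerivAt z (z' x) x) (hz' : HasDerivAt z' (F • z x) x)
    (hb : (w x).im ≠ 0) :
    HasDerivAt (fun x => riccatiEnergy (w x) (z x) (z' x))
      (((w' + w x ^ 2 - F).im *
          ((w x).im * ‖z x‖ ^ 2 - ‖z' x - (w x).re • z x‖ ^ 2 / (w x).im) -
        2 * (w' + w x ^ 2 - F).re * ⟪z' x - (w x).re • z x, z x⟫) / (w x).im) x := by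
  have hre : HasDerivAt (fun x => (w x).re) w'.re x :=
    Complex.reCLM.hasFDerivAt.comp_hasDerivAt x hw
  have him : HasDerivAt (fun x => (w x).im) w'.im x :=
    Complex.imCLM.hasFDerivAt.comp_hasDerivAt x hw
  have hA := hz'.sub (hre.smul hz)
  have h := (hA.norm_sq.div him hb).add (him.mul hz.norm_sq)
  refine h.congr_deriv ?_
  set A := z' x - (w x).re • z x with hAdef
  have hz'x : z' x = A + (w x).re • z x := by simp [hAdef]
  simp only [Pi.sub_apply, Pi.smul_apply', ← hAdef]
  rw [hz'x]
  simp only [inner_add_right, inner_sub_right, inner_smul_right, real_inner_self_eq_norm_sq,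
    real_inner_comm A (z x), Complex.add_re, Complex.add_im, Complex.sub_re, Complex.sub_im,
    Complex.ofReal_re, Complex.ofReal_im, pow_two, Complex.mul_re, Complex.mul_im]
  field_simp
  ring

lemma abs_div_im_le_mul_riccatiEnergy {w e : ℂ} (hw : 0 < w.im) (z z' : E) :
    |(e.im * (w.im * ‖z‖ ^ 2 - ‖z' - w.re • z‖ ^ 2 / w.im) -
        2 * e.re * ⟪z' - w.re • z, z⟫) / w.im| ≤ 2 * ‖e‖ / w.im * riccatiEnergy w z z' := by
  set A := z' - w.re • z
  have hA : 0 ≤ ‖A‖ ^ 2 / w.im := by positivity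
  have hz : 0 ≤ w.im * ‖z‖ ^ 2 := by positivity
  have hdiff : |w.im * ‖z‖ ^ 2 - ‖A‖ ^ 2 / w.im| ≤ riccatiEnergy w z z' := by
    rw [riccatiEnergy, abs_le]
    constructor <;> linarith
  have hinner : 2 * |⟪A, z⟫| ≤ riccatiEnergy w z z' := calc
    2 * |⟪A, z⟫| ≤ 2 * (‖A‖ * ‖z‖) := by gcongr; exact abs_real_inner_le_norm A z
    _ ≤ 2 * (‖A‖ * ‖z‖) + (‖A‖ - w.im * ‖z‖) ^ 2 / w.im := le_add_of_nonneg_right (by positivity)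
    _ = riccatiEnergy w z z' := by rw [riccatiEnergy]; field_simp; ring
  rw [abs_div, abs_of_pos hw, div_mul_eq_mul_div]
  gcongr
  calc |e.im * (w.im * ‖z‖ ^ 2 - ‖A‖ ^ 2 / w.im) - 2 * e.re * ⟪A, z⟫|
      ≤ |e.im| * |w.im * ‖z‖ ^ 2 - ‖A‖ ^ 2 / w.im| + |e.re| * (2 * |⟪A, z⟫|) := by
        refine (abs_sub _ _).trans_eq ?_
        rw [abs_mul, abs_mul, abs_mul, abs_two]
        ring
    _ ≤ ‖e‖ * riccatiEnergy w z z' + ‖e‖ * riccatiEnergy w z z' := by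
        gcongr
        exacts [Complex.abs_im_le_norm e, Complex.abs_re_le_norm e]
    _ = 2 * ‖e‖ * riccatiEnergy w z z' := by ring

/-- `w`, with derivative `w'`, solves the Riccati equation `w' + w² = F` on `S` up to an error `κ`,
and stays in the half-plane `Im w ≥ β`. -/
structure IsApproxRiccatiSolution (F κ : ℝ → ℝ) (β : ℝ) (S : Set ℝ) (w w' : ℝ → ℂ) : Prop where
  hasDerivAt : ∀ x ∈ S, HasDerivAt w (w' x) x
  continuousOn_deriv : ContinuousOn w' S
  le_im : ∀ x ∈ S, β ≤ (w x).im
  norm_le : ∀ x ∈ S, ‖w' x + w x ^ 2 - F x‖ ≤ κ x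

namespace IsApproxRiccatiSolution

variable {F κ : ℝ → ℝ} {β : ℝ} {S : Set ℝ} {w w' : ℝ → ℂ}

lemma mono {T : Set ℝ} (h : IsApproxRiccatiSolution F κ β S w w') (hTS : T ⊆ S) :
    IsApproxRiccatiSolution F κ β T w w' where
  hasDerivAt x hx := h.hasDerivAt x (hTS hx)
  continuousOn_deriv := h.continuousOn_deriv.mono hTS
  le_im x hx := h.le_im x (hTS hx)
  norm_le x hx := h.norm_le x (hTS hx)

lemma absolutelyContinuousOnInterval_riccatiEnergy {s t : ℝ} {z z' : ℝ → E}
    (h : IsApproxRiccatiSolution F κ β (uIcc s t) w w') (hβ : 0 < β)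
    (hz : ∀ x ∈ uIcc s t, HasDerivAt z (z' x) x) (hz' : AbsolutelyContinuousOnInterval z' s t) :
    AbsolutelyContinuousOnInterval (fun x => riccatiEnergy (w x) (z x) (z' x)) s t := by
  have hw0 : ∀ x ∈ uIcc s t, (w x).im ≠ 0 := fun x hx => (hβ.trans_le (h.le_im x hx)).ne'
  have hre : ∀ x ∈ uIcc s t, HasDerivAt (fun x => (w x).re) (w' x).re x := fun x hx =>
    Complex.reCLM.hasFDerivAt.comp_hasDerivAt x (h.hasDerivAt x hx)
  have him : ∀ x ∈ uIcc s t, HasDerivAt (fun x => (w x).im) (w' x).im x := fun x hx =>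
    Complex.imCLM.hasFDerivAt.comp_hasDerivAt x (h.hasDerivAt x hx)
  have hre' := Complex.continuous_re.comp_continuousOn h.continuousOn_deriv
  have him' := Complex.continuous_im.comp_continuousOn h.continuousOn_deriv
  have himc : ContinuousOn (fun x => (w x).im) (uIcc s t) := fun x hx =>
    (him x hx).continuousAt.continuousWithinAt
  have hinv : AbsolutelyContinuousOnInterval (fun x => (w x).im⁻¹) s t :=
    absolutelyContinuousOnInterval_of_hasDerivAt (fun x hx => (him x hx).fun_inv (hw0 x hx))
      (him'.neg.div (himc.pow 2) fun x hx => pow_ne_zero 2 (hw0 x hx))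
  have hzA := absolutelyContinuousOnInterval_of_hasDerivAt hz hz'.continuousOn
  have hreA := absolutelyContinuousOnInterval_of_hasDerivAt hre hre'
  have himA := absolutelyContinuousOnInterval_of_hasDerivAt him him'
  simp only [riccatiEnergy, div_eq_mul_inv]
  exact ((absolutelyContinuousOnInterval_norm_sq (hz'.fun_sub (hreA.fun_smul hzA))).fun_mul
    hinv).fun_add (himA.fun_mul (absolutelyContinuousOnInterval_norm_sq hzA))

lemma riccatiEnergy_le {s t : ℝ} {z z' : ℝ → E}
    (h : IsApproxRiccatiSolution F κ β (uIcc s t) w w') (hβ : 0 < β)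
    (hκ : IntervalIntegrable κ volume s t)
    (hz : ∀ x ∈ uIcc s t, HasDerivAt z (z' x) x) (hz' : AbsolutelyContinuousOnInterval z' s t)
    (hz'' : ∀ᵐ x, x ∈ uIcc s t → HasDerivAt z' (F x • z x) x) :
    riccatiEnergy (w t) (z t) (z' t) ≤
      riccatiEnergy (w s) (z s) (z' s) * Real.exp |∫ x in s..t, 2 / β * κ x| := by
  have hw0 : ∀ x ∈ uIcc s t, 0 < (w x).im := fun x hx => hβ.trans_le (h.le_im x hx)
  have hE0 : ∀ x ∈ uIcc s t, 0 ≤ riccatiEnergy (w x) (z x) (z' x) := fun x hx =>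
    (by positivity : 0 ≤ β * ‖z x‖ ^ 2).trans
      (mul_norm_sq_le_riccatiEnergy (hw0 x hx).le (h.le_im x hx) _ _)
  refine le_mul_exp_integral_of_abs_deriv_le
    (h.absolutelyContinuousOnInterval_riccatiEnergy hβ hz hz') (hκ.const_mul _)
    (hE0 s left_mem_uIcc) ?_
  filter_upwards [hz''] with x hx hxI
  rw [(hasDerivAt_riccatiEnergy (h.hasDerivAt x hxI) (hz x hxI) (hx hxI) (hw0 x hxI).ne').deriv]
  refine (abs_div_im_le_mul_riccatiEnergy (hw0 x hxI) _ _).trans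
    (mul_le_mul_of_nonneg_right ?_ (hE0 x hxI))
  rw [mul_div_right_comm]
  gcongr
  exacts [h.le_im x hxI, h.norm_le x hxI]

end IsApproxRiccatiSolution

end RiccatiEnergy

namespace IsWeakSolution

variable {V κ : ℝ → ℝ} {E s t : ℝ} {u u' : ℝ → ℂ}

lemma intervalIntegrable_smul (hu : IsWeakSolution V E u u') (hs : 0 < s) (ht : 0 < t) :
    IntervalIntegrable (fun x => (V x - E) • u x) volume s t := by
  simp only [Complex.real_smul, Complex.ofReal_sub, sub_mul]
  rcases le_total s t with hst | hts
  exacts [(hu.2 s t hs hst).1, (hu.2 t s ht hts).1.symm]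

lemma deriv_sub_deriv (hu : IsWeakSolution V E u u') (hs : 0 < s) (ht : 0 < t) :
    u' t - u' s = ∫ x in s..t, (V x - E) • u x := by
  simp only [Complex.real_smul, Complex.ofReal_sub, sub_mul]
  rcases le_total s t with hst | hts
  · exact (hu.2 s t hs hst).2
  · rw [intervalIntegral.integral_symm, ← (hu.2 t s ht hts).2, neg_sub]

lemma absolutelyContinuousOnInterval_deriv (hu : IsWeakSolution V E u u') (hs : 0 < s)
    (ht : 0 < t) : AbsolutelyContinuousOnInterval u' s t := by
  have hint := (hu.intervalIntegrable_smul hs ht).norm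
  refine absolutelyContinuousOnInterval_of_dist_le (C := 1)
    (hint.absolutelyContinuousOnInterval_intervalIntegral (c := s) left_mem_uIcc)
    fun x hx y hy => ?_
  have hx0 : 0 < x := (lt_min hs ht).trans_le hx.1
  have hy0 : 0 < y := (lt_min hs ht).trans_le hy.1
  rw [dist_eq_norm, dist_eq_norm, one_mul, hu.deriv_sub_deriv hy0 hx0,
    intervalIntegral.integral_interval_sub_left (hint.mono_set (uIcc_subset_uIcc left_mem_uIcc hx))
      (hint.mono_set (uIcc_subset_uIcc left_mem_uIcc hy))]
  exact intervalIntegral.norm_integral_le_abs_integral_norm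

lemma ae_hasDerivAt_deriv (hu : IsWeakSolution V E u u') (hs : 0 < s) (ht : 0 < t) :
    ∀ᵐ x, x ∈ uIcc s t → HasDerivAt u' ((V x - E) • u x) x := by
  filter_upwards [(hu.intervalIntegrable_smul hs ht).ae_hasDerivAt_integral] with x hx hxI
  refine ((hx hxI s left_mem_uIcc).const_add (u' s)).congr_of_eventuallyEq ?_
  filter_upwards [Ioi_mem_nhds ((lt_min hs ht).trans_le hxI.1)] with y hy
  rw [← hu.deriv_sub_deriv hs hy, add_sub_cancel]

lemma exists_norm_le {S : Set ℝ} {β : ℝ} {w w' : ℝ → ℂ} (hu : IsWeakSolution V E u u')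
    (hw : IsApproxRiccatiSolution (fun x => V x - E) κ β S w w') (hβ : 0 < β)
    (hS : OrdConnected S) (hS0 : S ⊆ Ioi 0) (hκ : IntegrableOn κ S) :
    ∃ C, ∀ x ∈ S, ‖u x‖ ≤ C := by
  rcases S.eq_empty_or_nonempty with rfl | ⟨s, hs⟩
  · exact ⟨0, fun x hx => hx.elim⟩
  set G : ℝ := riccatiEnergy (w s) (u s) (u' s)
  have hG : 0 ≤ G := (by positivity : 0 ≤ β * ‖u s‖ ^ 2).trans
    (mul_norm_sq_le_riccatiEnergy (hβ.le.trans (hw.le_im s hs)) (hw.le_im s hs) _ _)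
  refine ⟨√(G * Real.exp (∫ x in S, ‖2 / β * κ x‖) / β), fun x hx => Real.le_sqrt_of_sq_le ?_⟩
  have hsx : uIcc s x ⊆ S := hS.uIcc_subset hs hx
  have hκsx : IntervalIntegrable κ volume s x :=
    intervalIntegrable_iff.2 (hκ.mono_set (uIoc_subset_uIcc.trans hsx))
  have henergy := (hw.mono hsx).riccatiEnergy_le hβ hκsx
    (fun y hy => hu.1 y (hS0 (hsx hy)))
    (hu.absolutelyContinuousOnInterval_deriv (hS0 hs) (hS0 hx))
    (hu.ae_hasDerivAt_deriv (hS0 hs) (hS0 hx))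
  have hint : |∫ y in s..x, 2 / β * κ y| ≤ ∫ y in S, ‖2 / β * κ y‖ := by
    rw [← Real.norm_eq_abs]
    refine intervalIntegral.norm_integral_le_integral_norm_uIoc.trans ?_
    exact setIntegral_mono_set (hκ.const_mul _).norm (.of_forall fun _ => norm_nonneg _)
      (uIoc_subset_uIcc.trans hsx).eventuallyLE
  rw [le_div_iff₀' hβ]
  calc β * ‖u x‖ ^ 2 ≤ riccatiEnergy (w x) (u x) (u' x) :=
        mul_norm_sq_le_riccatiEnergy (hβ.le.trans (hw.le_im x hx)) (hw.le_im x hx) _ _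
    _ ≤ G * Real.exp |∫ y in s..x, 2 / β * κ y| := henergy
    _ ≤ G * Real.exp (∫ y in S, ‖2 / β * κ y‖) := by gcongr

end IsWeakSolution

section BoundedVariation

lemma exists_monotone_dist_le {X : Type*} [PseudoMetricSpace X] {f : ℝ → X} {W : ℝ≥0}
    (hf : eVariationOn f univ ≤ W) :
    ∃ v : ℝ → ℝ, Monotone v ∧ (∀ x y, dist (f x) (f y) ≤ dist (v x) (v y)) ∧
      ∀ x y, dist (v x) (v y) ≤ W := by
  have hfin : BoundedVariationOn f univ := (hf.trans_lt ENNReal.coe_lt_top).ne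
  have hloc := hfin.locallyBoundedVariationOn
  have hmono : Monotone (variationOnFromTo f univ 0) :=
    monotoneOn_univ.1 (variationOnFromTo.monotoneOn hloc (mem_univ 0))
  have hdist : ∀ x y, x ≤ y → dist (variationOnFromTo f univ 0 x) (variationOnFromTo f univ 0 y) =
      (eVariationOn f (univ ∩ Icc x y)).toReal := fun x y hxy => by
    rw [dist_comm, Real.dist_eq, abs_of_nonneg (sub_nonneg.2 (hmono hxy)),
      ← variationOnFromTo.eq_of_le f univ hxy,
      ← variationOnFromTo.add hloc (mem_univ 0) (mem_univ x) (mem_univ y), add_sub_cancel_left]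
  refine ⟨variationOnFromTo f univ 0, hmono, fun x y => ?_, fun x y => ?_⟩
  · wlog hxy : x ≤ y generalizing x y
    · rw [dist_comm, dist_comm (variationOnFromTo f univ 0 x)]
      exact this y x (le_of_not_ge hxy)
    rw [hdist x y hxy]
    exact (hfin.mono inter_subset_left).dist_le ⟨mem_univ x, le_rfl, hxy⟩ ⟨mem_univ y, hxy, le_rfl⟩
  · wlog hxy : x ≤ y generalizing x y
    · rw [dist_comm]
      exact this y x (le_of_not_ge hxy)
    rw [hdist x y hxy]
    exact ENNReal.toReal_le_coe_of_le_coe ((eVariationOn.mono f inter_subset_left).trans hf)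

lemma stronglyMeasurable_of_dist_le {α X Y : Type*} [MeasurableSpace α] [MetricSpace X]
    [PseudoMetricSpace Y] [SecondCountableTopology Y] [MeasurableSpace Y] [BorelSpace Y]
    {f : α → X} {v : α → Y} (hv : Measurable v)
    (h : ∀ x y, dist (f x) (f y) ≤ dist (v x) (v y)) : StronglyMeasurable f := by
  have hlip : LipschitzWith 1 (f ∘ rangeSplitting v) := LipschitzWith.mk_one fun r r' =>
    (h _ _).trans_eq (by rw [apply_rangeSplitting v, apply_rangeSplitting v, Subtype.dist_eq])
  have hf : f = (f ∘ rangeSplitting v) ∘ rangeFactorization v := funext fun x =>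
    dist_le_zero.1 <| (h _ _).trans_eq <| by
      rw [apply_rangeSplitting v, rangeFactorization_coe, dist_self]
  rw [hf]
  exact hlip.continuous.stronglyMeasurable.comp_measurable hv.rangeFactorization

lemma stronglyMeasurable_of_eVariationOn_le {X : Type*} [MetricSpace X] {f : ℝ → X} {W : ℝ≥0}
    (hf : eVariationOn f univ ≤ W) : StronglyMeasurable f := by
  obtain ⟨v, hv, hfv, -⟩ := exists_monotone_dist_le hf
  exact stronglyMeasurable_of_dist_le hv.measurable hfv

lemma lintegral_increment_le {v : ℝ → ℝ} {W : ℝ≥0} (hv : Monotone v)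
    (hW : ∀ x y, dist (v x) (v y) ≤ W) (h : ℝ≥0) :
    ∫⁻ x, ENNReal.ofReal (v (x + h) - v x) ≤ h * W := by
  have hslope : ∀ x, v (x + h) - v x = h * slope v x (x + h) := fun x => by
    simpa using (sub_smul_slope v x (x + h)).symm
  have hint : ∀ a b : ℝ, a ≤ b → ∫⁻ x in Ioc a b, ENNReal.ofReal (v (x + h) - v x) ≤ h * W := by
    intro a b hab
    have hnonneg : ∀ x, 0 ≤ v (x + h) - v x := fun x => sub_nonneg.2 (hv (by simp))
    have hmono := hv.monotoneOn (Icc a (b + h))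
    have hi : IntervalIntegrable (fun x => v (x + h) - v x) volume a b := by
      simp only [hslope]
      exact (hmono.intervalIntegrable_slope hab h.2).const_mul _
    rw [← ofReal_integral_eq_lintegral_ofReal hi.1 (.of_forall hnonneg),
      ← intervalIntegral.integral_of_le hab]
    simp only [hslope, intervalIntegral.integral_const_mul]
    rw [ENNReal.ofReal_mul h.coe_nonneg, ENNReal.ofReal_coe_nnreal]
    gcongr
    refine ENNReal.ofReal_le_of_le_toReal ?_
    exact (hmono.intervalIntegral_slope_le hab h.2).trans
      ((le_abs_self _).trans (hW (b + h) a))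
  have hmeas : Measurable v := hv.measurable
  have hcover : AECover (volume : Measure ℝ) atTop fun n : ℕ => Ioc (-n : ℝ) n :=
    aecover_Ioc (tendsto_neg_atTop_atBot.comp tendsto_natCast_atTop_atTop)
      tendsto_natCast_atTop_atTop
  refine le_of_tendsto' (hcover.lintegral_tendsto_of_countably_generated (by fun_prop)) fun n =>
    hint _ _ (neg_le_self n.cast_nonneg)

lemma norm_le_norm_add_of_eVariationOn_le {α E : Type*} [LinearOrder α]
    [SeminormedAddCommGroup E] {f : α → E} {S : Set α} {W : ℝ≥0} (hf : eVariationOn f S ≤ W)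
    {x y : α} (hx : x ∈ S) (hy : y ∈ S) : ‖f x‖ ≤ ‖f y‖ + W := by
  have h : dist (f x) (f y) ≤ W := by
    rw [dist_edist]
    exact ENNReal.toReal_le_coe_of_le_coe ((eVariationOn.edist_le f hx hy).trans hf)
  rw [← sub_le_iff_le_add']
  exact (norm_sub_norm_le _ _).trans ((dist_eq_norm _ _).symm.trans_le h)

end BoundedVariation

section Smoothing

variable {E : Type*} [NormedAddCommGroup E] [NormedSpace ℝ E] {f : ℝ → E}

/-- The moving average of `f` over the unit interval ahead, used to smooth functions of bounded
variation. -/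
noncomputable def forwardAverage (f : ℝ → E) (x : ℝ) : E := ∫ t in x..x + 1, f t

lemma dist_forwardAverage_le [CompleteSpace E] {c : E} {x K : ℝ}
    (hf : IntervalIntegrable f volume x (x + 1))
    (h : ∀ t ∈ Icc x (x + 1), dist (f t) c ≤ K) : dist (forwardAverage f x) c ≤ K := by
  have hsub : forwardAverage f x - c = ∫ t in x..x + 1, (f t - c) := by
    rw [intervalIntegral.integral_sub hf intervalIntegrable_const]
    simp [forwardAverage]
  rw [dist_eq_norm, hsub]
  refine (intervalIntegral.norm_integral_le_of_norm_le_const (C := K) fun t ht => ?_).trans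
    (by simp)
  rw [uIoc_of_le (by linarith)] at ht
  simpa [dist_eq_norm] using h t ⟨ht.1.le, ht.2⟩

lemma forwardAverage_eq_sub (hf : ∀ a b, IntervalIntegrable f volume a b) (x : ℝ) :
    forwardAverage f x = (∫ t in 0..x + 1, f t) - ∫ t in 0..x, f t :=
  (intervalIntegral.integral_interval_sub_left (hf _ _) (hf _ _)).symm

lemma continuous_forwardAverage (hf : ∀ a b, IntervalIntegrable f volume a b) :
    Continuous (forwardAverage f) := by
  have h := intervalIntegral.continuous_primitive hf 0
  simp only [funext (forwardAverage_eq_sub hf)]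
  fun_prop

lemma hasDerivAt_forwardAverage [CompleteSpace E] (hf : Continuous f) (x : ℝ) :
    HasDerivAt (forwardAverage f) (f (x + 1) - f x) x := by
  have h : ∀ y, HasDerivAt (fun x => ∫ t in (0 : ℝ)..x, f t) (f y) y := fun y =>
    (hf.integral_hasStrictDerivAt 0 y).hasDerivAt
  simp only [funext (forwardAverage_eq_sub hf.intervalIntegrable)]
  exact ((h (x + 1)).comp_add_const x 1).sub (h x)

lemma exists_smoothing [CompleteSpace E] {W M : ℝ≥0} (hf : eVariationOn f univ ≤ W)
    (hM : ∀ x, ‖f x‖ ≤ M) :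
    ∃ g g' : ℝ → E, (∀ x, HasDerivAt g (g' x) x) ∧ Continuous g' ∧ (∀ x, ‖g x‖ ≤ M) ∧
      (∀ x, ‖g' x‖ ≤ W) ∧ ∫⁻ x, ‖g' x‖ₑ ≤ 2 * W ∧ ∫⁻ x, ‖f x - g x‖ₑ ≤ 2 * W := by
  obtain ⟨v, hv, hfv, hvW⟩ := exists_monotone_dist_le hf
  have hfi : ∀ a b, IntervalIntegrable f volume a b := fun a b =>
    intervalIntegrable_iff.2 <| Measure.integrableOn_of_bounded (M := M) (by simp)
      (stronglyMeasurable_of_eVariationOn_le hf).aestronglyMeasurable (.of_forall hM)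
  have hAc : Continuous (forwardAverage f) := continuous_forwardAverage hfi
  have hAi : ∀ a b, IntervalIntegrable (forwardAverage f) volume a b := hAc.intervalIntegrable
  have hosc : ∀ x, ∀ s ∈ Icc x (x + 2), ∀ t ∈ Icc x (x + 2), dist (f s) (f t) ≤ v (x + 2) - v x :=
    fun x s hs t ht => (hfv s t).trans <|
      Real.dist_le_of_mem_Icc ⟨hv hs.1, hv hs.2⟩ ⟨hv ht.1, hv ht.2⟩
  have hg' : ∀ x, ‖forwardAverage f (x + 1) - forwardAverage f x‖ ≤ v (x + 2) - v x := fun x => by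
    rw [← dist_eq_norm]
    refine dist_forwardAverage_le (hfi _ _) fun s hs => ?_
    rw [dist_comm]
    exact dist_forwardAverage_le (hfi _ _) fun t ht => hosc x t
      ⟨ht.1, by linarith [ht.2]⟩ s ⟨by linarith [hs.1], by linarith [hs.2]⟩
  have hg : ∀ x, ‖f x - forwardAverage (forwardAverage f) x‖ ≤ v (x + 2) - v x := fun x => by
    rw [← dist_eq_norm, dist_comm]
    refine dist_forwardAverage_le (hAi _ _) fun s hs => dist_forwardAverage_le (hfi _ _) fun t ht =>
      hosc x t ⟨hs.1.trans ht.1, by linarith [hs.2, ht.2]⟩ x ⟨le_rfl, by linarith⟩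
  have hlint : ∀ h : ℝ → E, (∀ x, ‖h x‖ ≤ v (x + 2) - v x) → ∫⁻ x, ‖h x‖ₑ ≤ 2 * W := fun h hh => by
    refine (lintegral_mono fun x => ?_).trans (lintegral_increment_le hv hvW 2)
    rw [← ofReal_norm]
    exact ENNReal.ofReal_le_ofReal (hh x)
  refine ⟨forwardAverage (forwardAverage f), _, hasDerivAt_forwardAverage hAc, by fun_prop,
    fun x => ?_, fun x => (hg' x).trans ((le_abs_self _).trans (hvW (x + 2) x)), hlint _ hg',
    hlint _ hg⟩
  rw [← dist_zero_right]
  exact dist_forwardAverage_le (hAi _ _) fun s _ => dist_forwardAverage_le (hfi _ _) fun t _ =>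
    (dist_zero_right _).trans_le (hM t)

end Smoothing

section Series

lemma enorm_finsetProd {R ι : Type*} [NormedCommRing R] [NormMulClass R] [NormOneClass R]
    (s : Finset ι) (f : ι → R) : ‖∏ i ∈ s, f i‖ₑ = ∏ i ∈ s, ‖f i‖ₑ := by
  simp only [enorm_eq_nnnorm, nnnorm_prod, ENNReal.ofNNReal_finsetProd]

lemma prod_le_pow_mul_sum_pow {R ι : Type*} [CommSemiring R] [LinearOrder R] [IsOrderedRing R]
    [CanonicallyOrderedAdd R] {s : Finset ι} {a : ι → R} {M : R} {p : ℕ} (hp : 1 ≤ p)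
    (hps : p ≤ s.card) (hM : ∀ i ∈ s, a i ≤ M) :
    ∏ i ∈ s, a i ≤ M ^ (s.card - p) * ∑ i ∈ s, a i ^ p := by
  obtain ⟨k, hks, hk⟩ := s.exists_max_image a (Finset.card_pos.1 (hp.trans hps))
  calc ∏ i ∈ s, a i ≤ a k ^ s.card := Finset.prod_le_pow_card _ _ _ hk
    _ = a k ^ (s.card - p) * a k ^ p := by rw [← pow_add, Nat.sub_add_cancel hps]
    _ ≤ M ^ (s.card - p) * ∑ i ∈ s, a i ^ p := by
        gcongr
        exacts [hM k hks, Finset.single_le_sum (f := fun i => a i ^ p) (fun _ _ => zero_le) hks]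

variable {α ι : Type*} [MeasurableSpace α] {μ : Measure α} [Countable ι]

lemma integrable_tsum_of_tsum_lintegral_enorm_ne_top {E : Type*} [NormedAddCommGroup E]
    [CompleteSpace E] {F : ι → α → E} (hF : ∀ i, AEStronglyMeasurable (F i) μ)
    (h : ∑' i, ∫⁻ x, ‖F i x‖ₑ ∂μ ≠ ⊤) : Integrable (fun x => ∑' i, F i x) μ := by
  rw [← lintegral_tsum fun i => (hF i).enorm] at h
  have hsum : ∀ᵐ x ∂μ, Summable fun i => F i x := by
    filter_upwards [ae_lt_top' (.tsum fun i => (hF i).enorm) h] with x hx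
    exact .of_enorm hx.ne
  refine ⟨aestronglyMeasurable_of_tendsto_ae atTop
    (fun s => Finset.aestronglyMeasurable_fun_sum s fun i _ => hF i)
    (hsum.mono fun x hx => hx.hasSum), ?_⟩
  exact (lintegral_mono fun x => enorm_tsum_le_tsum_enorm).trans_lt h.lt_top

lemma integrable_tsum_mul_of_lintegral_enorm_le {R : Type*} [NormedRing R] [NormMulClass R]
    [CompleteSpace R] {A : ι → R} {F : ι → α → R} {D : ℝ≥0} (hA : Summable fun i => ‖A i‖)
    (hF : ∀ i, AEStronglyMeasurable (F i) μ) (hD : ∀ i, ∫⁻ x, ‖F i x‖ₑ ∂μ ≤ D) :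
    Integrable (fun x => ∑' i, A i * F i x) μ := by
  refine integrable_tsum_of_tsum_lintegral_enorm_ne_top (fun i => (hF i).const_mul (A i)) ?_
  have hle : ∀ i, ∫⁻ x, ‖A i * F i x‖ₑ ∂μ ≤ ‖A i‖ₑ * D := fun i => by
    simp only [enorm_mul]
    rw [lintegral_const_mul' _ _ enorm_ne_top]
    gcongr
    exact hD i
  refine ((ENNReal.tsum_le_tsum hle).trans_lt ?_).ne
  rw [ENNReal.tsum_mul_right]
  exact ENNReal.mul_lt_top (tsum_enorm_ne_top_iff_summable_norm.2 hA).lt_top ENNReal.coe_lt_top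

end Series

section HomogeneousSeries

variable {ι : Type*} {f b : ι → ℝ → ℂ} {J : ℕ} {A : (Fin J → ι) → ℂ} {x : ℝ}

/-- The series homogeneous of degree `J` in the functions `f k`, with coefficients `A`. -/
noncomputable def homSeries (f : ι → ℝ → ℂ) (A : (Fin J → ι) → ℂ) (x : ℝ) : ℂ :=
  ∑' m, A m * ∏ i, f (m i) x

/-- The polarization of `homSeries f A`: one factor `f k` of each monomial in turn is replaced by
`b k`. -/
noncomputable def homSeriesDeriv (f b : ι → ℝ → ℂ) (A : (Fin J → ι) → ℂ) (x : ℝ) : ℂ :=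
  ∑' m, A m * ∑ i, (∏ j ∈ Finset.univ.erase i, f (m j) x) * b (m i) x

lemma homSeries_zero (f : ι → ℝ → ℂ) (A : (Fin 0 → ι) → ℂ) (x : ℝ) :
    homSeries f A x = A Fin.elim0 := by
  rw [homSeries, tsum_eq_single Fin.elim0 fun m hm => absurd (Subsingleton.elim _ _) hm]
  simp

lemma homSeries_one (f : ι → ℝ → ℂ) (c : ι → ℂ) (x : ℝ) :
    homSeries f (fun m : Fin 1 → ι => c (m 0)) x = ∑' k, c k * f k x := by
  rw [homSeries, ← (Equiv.funUnique (Fin 1) ι).symm.tsum_eq]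
  simp

/-- The coefficients of the product of the homogeneous series with coefficients `A` and `B`. -/
def appendCoeff {j n : ℕ} (A : (Fin j → ι) → ℂ) (B : (Fin n → ι) → ℂ) (m : Fin (j + n) → ι) : ℂ :=
  A (fun i => m (Fin.castAdd n i)) * B (fun i => m (Fin.natAdd j i))

lemma summable_norm_appendCoeff {j n : ℕ} {A : (Fin j → ι) → ℂ} {B : (Fin n → ι) → ℂ}
    (hA : Summable fun m => ‖A m‖) (hB : Summable fun m => ‖B m‖) :
    Summable fun m => ‖appendCoeff A B m‖ := by
  rw [← (Fin.appendEquiv j n).summable_iff]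
  refine (hA.mul_norm hB).congr fun z => ?_
  simp [appendCoeff, Fin.appendEquiv]

lemma homSeries_mul {j n : ℕ} {A : (Fin j → ι) → ℂ} {B : (Fin n → ι) → ℂ}
    (hA : Summable fun m => ‖A m * ∏ i, f (m i) x‖)
    (hB : Summable fun m => ‖B m * ∏ i, f (m i) x‖) :
    homSeries f A x * homSeries f B x = homSeries f (appendCoeff A B) x := by
  rw [homSeries, homSeries, homSeries, tsum_mul_tsum_of_summable_norm hA hB,
    ← (Fin.appendEquiv j n).tsum_eq]
  refine tsum_congr fun z => ?_
  simp only [appendCoeff, Fin.appendEquiv, Equiv.coe_fn_mk, Fin.append_left, Fin.append_right,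
    Fin.prod_univ_add]
  ring

end HomogeneousSeries

/-- A family of decaying `C¹` waves `f k` with frequencies `φ k`: up to a remainder `b k`, `f k`
solves the equation `f' = -iφ_k f` of a pure wave. The `f k` are uniformly `Lᵖ` and the `b k`
uniformly `L¹` on `(a, ∞)`. -/
structure IsWaveFamily {ι : Type*} (φ : ι → ℝ) (a : ℝ) (p : ℕ) (M D : ℝ≥0) (f b : ι → ℝ → ℂ) :
    Prop where
  hasDerivAt : ∀ k x, HasDerivAt (f k) (-Complex.I * φ k * f k x + b k x) x
  continuous_remainder : ∀ k, Continuous (b k)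
  norm_le : ∀ k x, ‖f k x‖ ≤ M
  norm_remainder_le : ∀ k x, ‖b k x‖ ≤ M
  tendsto_zero : ∀ k, Tendsto (f k) atTop (𝓝 0)
  lintegral_pow_le : ∀ k, ∫⁻ x in Ioi a, ‖f k x‖ₑ ^ p ≤ D
  lintegral_remainder_le : ∀ k, ∫⁻ x in Ioi a, ‖b k x‖ₑ ≤ D

namespace IsWaveFamily

variable {ι : Type*} {φ : ι → ℝ} {a : ℝ} {p : ℕ} {M D : ℝ≥0} {f b : ι → ℝ → ℂ} {J : ℕ}
  {A : (Fin J → ι) → ℂ}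

lemma continuous (h : IsWaveFamily φ a p M D f b) (k : ι) : Continuous (f k) :=
  continuous_iff_continuousAt.2 fun x => (h.hasDerivAt k x).continuousAt

lemma continuous_monomial (h : IsWaveFamily φ a p M D f b) (m : Fin J → ι) :
    Continuous fun x => ∏ i, f (m i) x :=
  continuous_finsetProd _ fun i _ => h.continuous (m i)

lemma continuous_monomialDeriv (h : IsWaveFamily φ a p M D f b) (m : Fin J → ι) :
    Continuous fun x => ∑ i, (∏ j ∈ Finset.univ.erase i, f (m j) x) * b (m i) x :=
  continuous_finsetSum _ fun i _ => (continuous_finsetProd _ fun j _ => h.continuous (m j)).mul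
    (h.continuous_remainder (m i))

lemma hasDerivAt_monomial (h : IsWaveFamily φ a p M D f b) (m : Fin J → ι) (x : ℝ) :
    HasDerivAt (fun x => ∏ i, f (m i) x)
      (-Complex.I * (∑ i, φ (m i) : ℝ) * ∏ i, f (m i) x +
        ∑ i, (∏ j ∈ Finset.univ.erase i, f (m j) x) * b (m i) x) x := by
  refine (HasDerivAt.fun_finsetProd (u := Finset.univ) fun i _ =>
    h.hasDerivAt (m i) x).congr_deriv ?_
  simp only [smul_eq_mul, mul_add, Finset.sum_add_distrib, Complex.ofReal_sum, Finset.mul_sum,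
    Finset.sum_mul]
  congr 1
  refine Finset.sum_congr rfl fun i hi => ?_
  rw [← Finset.prod_erase_mul _ _ hi]
  ring

lemma enorm_sum_prod_erase_mul_le (h : IsWaveFamily φ a p M D f b) (m : Fin J → ι) (x : ℝ) :
    ‖∑ i, (∏ j ∈ Finset.univ.erase i, f (m j) x) * b (m i) x‖ₑ ≤
      M ^ (J - 1) * ∑ i, ‖b (m i) x‖ₑ := by
  rw [Finset.mul_sum]
  refine (enorm_sum_le _ _).trans (Finset.sum_le_sum fun i _ => ?_)
  rw [enorm_mul, enorm_finsetProd]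
  gcongr
  simpa using Finset.prod_le_pow_card (Finset.univ.erase i) _ _ fun j _ =>
    enorm_le_coe.2 (h.norm_le (m j) x)

lemma norm_mul_monomial_le (h : IsWaveFamily φ a p M D f b) (m : Fin J → ι) (x : ℝ) :
    ‖A m * ∏ i, f (m i) x‖ ≤ ‖A m‖ * M ^ J := by
  rw [norm_mul, norm_prod]
  gcongr
  exact (Finset.prod_le_prod (fun _ _ => norm_nonneg _) fun i _ => h.norm_le (m i) x).trans_eq
    (by simp)

lemma norm_mul_monomialDeriv_le (h : IsWaveFamily φ a p M D f b) (m : Fin J → ι) (x : ℝ) :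
    ‖A m * ∑ i, (∏ j ∈ Finset.univ.erase i, f (m j) x) * b (m i) x‖ ≤
      ‖A m‖ * (M ^ (J - 1) * (J * M) : ℝ≥0) := by
  rw [norm_mul]
  gcongr
  rw [← coe_nnnorm, NNReal.coe_le_coe, ← ENNReal.coe_le_coe]
  refine (h.enorm_sum_prod_erase_mul_le m x).trans ?_
  push_cast
  gcongr
  simpa using Finset.sum_le_card_nsmul Finset.univ _ (M : ℝ≥0∞) fun i _ =>
    enorm_le_coe.2 (h.norm_remainder_le (m i) x)

lemma summable_norm (h : IsWaveFamily φ a p M D f b) (hA : Summable fun m => ‖A m‖) (x : ℝ) :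
    Summable fun m => ‖A m * ∏ i, f (m i) x‖ :=
  .of_nonneg_of_le (fun _ => norm_nonneg _) (fun m => h.norm_mul_monomial_le m x) (hA.mul_right _)

lemma continuous_homSeries (h : IsWaveFamily φ a p M D f b) (hA : Summable fun m => ‖A m‖) :
    Continuous (homSeries f A) :=
  continuous_tsum (fun m => continuous_const.mul (h.continuous_monomial m)) (hA.mul_right _)
    fun m x => h.norm_mul_monomial_le m x

lemma continuous_homSeriesDeriv (h : IsWaveFamily φ a p M D f b) (hA : Summable fun m => ‖A m‖) :
    Continuous (homSeriesDeriv f b A) :=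
  continuous_tsum (fun m => continuous_const.mul (h.continuous_monomialDeriv m)) (hA.mul_right _)
    fun m x => h.norm_mul_monomialDeriv_le m x

lemma hasDerivAt_homSeries (h : IsWaveFamily φ a p M D f b) (hA : Summable fun m => ‖A m‖)
    (hA' : Summable fun m => ‖A m * (∑ i, φ (m i) : ℝ)‖) (x : ℝ) :
    HasDerivAt (homSeries f A) (-Complex.I * homSeries f (fun m => A m * (∑ i, φ (m i) : ℝ)) x +
      homSeriesDeriv f b A x) x := by
  have hI : Summable fun m => ‖-Complex.I * (A m * (∑ i, φ (m i) : ℝ))‖ := by simpa using hA'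
  refine (hasDerivAt_tsum (y₀ := 0)
    ((hI.mul_right (M ^ J : ℝ)).add (hA.mul_right ((M ^ (J - 1) * (J * M) : ℝ≥0) : ℝ)))
    (fun m y => ((h.hasDerivAt_monomial m y).const_mul (A m)).congr_deriv
      (by rw [mul_add]; congr 1; ring))
    (fun m y => (norm_add_le _ _).trans (add_le_add
      (h.norm_mul_monomial_le (A := fun m => -Complex.I * (A m * (∑ i, φ (m i) : ℝ))) m y)
      (h.norm_mul_monomialDeriv_le m y)))
    (h.summable_norm hA 0).of_norm x).congr_deriv ?_
  rw [homSeries, homSeriesDeriv, ← tsum_mul_left, ← Summable.tsum_add]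
  · simp only [mul_assoc]
  · exact (h.summable_norm hA' x).of_norm.mul_left _
  · exact .of_norm_bounded (hA.mul_right _) fun m => h.norm_mul_monomialDeriv_le m x

lemma tendsto_homSeries (h : IsWaveFamily φ a p M D f b) (hJ : 1 ≤ J)
    (hA : Summable fun m => ‖A m‖) : Tendsto (homSeries f A) atTop (𝓝 0) := by
  have hterm : ∀ m, Tendsto (fun x => A m * ∏ i, f (m i) x) atTop (𝓝 0) := fun m => by
    simpa [show J ≠ 0 by omega] using
      (tendsto_finsetProd Finset.univ fun i _ => h.tendsto_zero (m i)).const_mul (A m)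
  rw [← tsum_zero (β := Fin J → ι)]
  exact tendsto_tsum_of_dominated_convergence (hA.mul_right (M ^ J : ℝ)) hterm
    (.of_forall fun x m => h.norm_mul_monomial_le m x)

lemma integrableOn_homSeriesDeriv [Countable ι] (h : IsWaveFamily φ a p M D f b)
    (hA : Summable fun m => ‖A m‖) : IntegrableOn (homSeriesDeriv f b A) (Ioi a) := by
  refine integrable_tsum_mul_of_lintegral_enorm_le (D := M ^ (J - 1) * (J * D)) hA
    (fun m => (h.continuous_monomialDeriv m).aestronglyMeasurable) fun m => ?_
  refine (lintegral_mono fun x => h.enorm_sum_prod_erase_mul_le m x).trans ?_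
  rw [lintegral_const_mul' _ _ (by simp), lintegral_finsetSum' _ fun i _ =>
    (h.continuous_remainder (m i)).enorm.aemeasurable]
  push_cast
  gcongr
  simpa using Finset.sum_le_card_nsmul Finset.univ _ (D : ℝ≥0∞) fun i _ =>
    h.lintegral_remainder_le (m i)

lemma integrableOn_homSeries [Countable ι] (h : IsWaveFamily φ a p M D f b) (hp : 1 ≤ p)
    (hpJ : p ≤ J) (hA : Summable fun m => ‖A m‖) : IntegrableOn (homSeries f A) (Ioi a) := by
  refine integrable_tsum_mul_of_lintegral_enorm_le (D := M ^ (J - p) * (J * D)) hA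
    (fun m => (h.continuous_monomial m).aestronglyMeasurable) fun m => ?_
  have hle : ∀ x, ‖∏ i, f (m i) x‖ₑ ≤ M ^ (J - p) * ∑ i, ‖f (m i) x‖ₑ ^ p := fun x => by
    rw [enorm_finsetProd]
    simpa using prod_le_pow_mul_sum_pow (s := Finset.univ) hp (by simpa using hpJ)
      fun i _ => enorm_le_coe.2 (h.norm_le (m i) x)
  refine (lintegral_mono hle).trans ?_
  rw [lintegral_const_mul' _ _ (by simp), lintegral_finsetSum' _ fun i _ =>
    ((h.continuous (m i)).enorm.aemeasurable.pow_const p)]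
  push_cast
  gcongr
  simpa using Finset.sum_le_card_nsmul Finset.univ _ (D : ℝ≥0∞) fun i _ =>
    h.lintegral_pow_le (m i)

end IsWaveFamily

section HCoeff

lemma hFun_succ (J : ℕ) (η : ℝ) (φ : ℕ → ℝ) :
    hFun (J + 1) η φ = (η - ∑ i ∈ Finset.range (J + 1), φ i)⁻¹ *
      ∑ j ∈ Finset.range (J + 1), hFun j η φ * hFun (J - j) η (fun i => φ (i + j)) := by
  rw [hFun, Finset.sum_attach (Finset.range (J + 1))
    fun j => hFun j η φ * hFun (J - j) η (fun i => φ (i + j))]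

lemma hFun_congr {η : ℝ} {J : ℕ} {φ ψ : ℕ → ℝ} (h : ∀ i < J, φ i = ψ i) :
    hFun J η φ = hFun J η ψ := by
  induction J using Nat.strong_induction_on generalizing φ ψ with
  | _ J ih =>
    cases J with
    | zero => rw [hFun, hFun]
    | succ d =>
      rw [hFun_succ, hFun_succ, Finset.sum_congr rfl fun i hi => h i (Finset.mem_range.1 hi)]
      congr 1
      refine Finset.sum_congr rfl fun j hj => ?_
      have hj := Finset.mem_range.1 hj
      rw [ih j hj fun i hi => h i (by omega),
        ih (d - j) (by omega) (φ := fun i => φ (i + j)) (ψ := fun i => ψ (i + j))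
          fun i hi => h (i + j) (by omega)]

/-- The finite sequence `ψ`, extended by zero so that it can be fed to `hFun`; `padFin J φ m` is
`zeroPad (φ ∘ m)`. -/
def zeroPad {J : ℕ} (ψ : Fin J → ℝ) (n : ℕ) : ℝ :=
  if h : n < J then ψ ⟨n, h⟩ else 0

variable {ι : Type*} {η : ℝ} {c : ι → ℂ} {φ : ι → ℝ}

/-- The coefficients `c_{m_1}⋯c_{m_J} h_J(η; φ_{m_1},…,φ_{m_J})`. -/
noncomputable def hCoeff (η : ℝ) (c : ι → ℂ) (φ : ι → ℝ) (J : ℕ) (m : Fin J → ι) : ℂ :=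
  (∏ i, c (m i)) * hFun J η (zeroPad (φ ∘ m))

/-- The `j`-th of the `d + 1` terms into which the recursion for `hFun` splits the coefficient
`hCoeff η c φ (d + 1) m` once its small divisor is removed. -/
noncomputable def hSplitCoeff (η : ℝ) (c : ι → ℂ) (φ : ι → ℝ) (d j : ℕ) (m : Fin (d + 1) → ι) : ℂ :=
  (∏ i, c (m i)) *
    (hFun j η (zeroPad (φ ∘ m)) * hFun (d - j) η (fun i => zeroPad (φ ∘ m) (i + j)) : ℝ)

lemma sum_range_zeroPad {J : ℕ} (ψ : Fin J → ℝ) :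
    ∑ i ∈ Finset.range J, zeroPad ψ i = ∑ i, ψ i := by
  rw [Finset.sum_range]
  exact Finset.sum_congr rfl fun i _ => by simp [zeroPad]

lemma hCoeff_zero (m : Fin 0 → ι) : hCoeff η c φ 0 m = 1 := by
  simp [hCoeff, hFun]

lemma hCoeff_succ_mul_sub {d : ℕ} {m : Fin (d + 1) → ι} (hm : η ≠ ∑ i, φ (m i)) :
    hCoeff η c φ (d + 1) m * (η - (∑ i, φ (m i) : ℝ)) =
      ∑ j ∈ Finset.range (d + 1), hSplitCoeff η c φ d j m := by
  have h0 : (η : ℂ) - (∑ i, φ (m i) : ℝ) ≠ 0 := mod_cast sub_ne_zero.2 hm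
  simp only [hSplitCoeff]
  rw [hCoeff, hFun_succ, sum_range_zeroPad, ← Finset.mul_sum, ← Complex.ofReal_sum,
    Complex.ofReal_mul, Complex.ofReal_inv, Complex.ofReal_sub]
  simp only [Function.comp_apply]
  field_simp

lemma hSplitCoeff_add (j n : ℕ) :
    hSplitCoeff η c φ (j + n) j =
      appendCoeff (appendCoeff (hCoeff η c φ j) (hCoeff η c φ n))
        (fun m : Fin 1 → ι => c (m 0)) := by
  funext m
  have hleft : hFun j η (zeroPad (φ ∘ m)) =
      hFun j η (zeroPad (φ ∘ fun i => m (Fin.castAdd 1 (Fin.castAdd n i)))) := by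
    refine hFun_congr fun i hi => ?_
    simp only [zeroPad, hi, show i < j + n + 1 by omega, dif_pos]
    rfl
  have hright : hFun n η (fun i => zeroPad (φ ∘ m) (i + j)) =
      hFun n η (zeroPad (φ ∘ fun i => m (Fin.castAdd 1 (Fin.natAdd j i)))) := by
    refine hFun_congr fun i hi => ?_
    simp only [zeroPad, hi, show i + j < j + n + 1 by omega, dif_pos, Function.comp_apply]
    congr 2
    ext
    simp [add_comm]
  rw [hSplitCoeff, Nat.add_sub_cancel_left, hleft, hright, Fin.prod_univ_add, Fin.prod_univ_add]
  simp only [appendCoeff, hCoeff, Finset.univ_unique, Fin.default_eq_zero, Finset.prod_singleton,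
    Complex.ofReal_mul]
  ring

lemma summable_norm_comp_apply_zero (hc : Summable fun k => ‖c k‖) :
    Summable fun m : Fin 1 → ι => ‖c (m 0)‖ :=
  (Equiv.funUnique (Fin 1) ι).summable_iff.2 hc

lemma summable_norm_hSplitCoeff (hc : Summable fun k => ‖c k‖) {d j : ℕ} (hjd : j ≤ d)
    (hj : Summable fun m => ‖hCoeff η c φ j m‖)
    (hdj : Summable fun m => ‖hCoeff η c φ (d - j) m‖) :
    Summable fun m => ‖hSplitCoeff η c φ d j m‖ := by
  obtain ⟨n, rfl⟩ := Nat.exists_eq_add_of_le hjd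
  rw [Nat.add_sub_cancel_left] at hdj
  rw [hSplitCoeff_add]
  exact summable_norm_appendCoeff (summable_norm_appendCoeff hj hdj)
    (summable_norm_comp_apply_zero hc)

lemma summable_norm_hCoeff_mul_sum {d : ℕ} (hd : Summable fun m => ‖hCoeff η c φ (d + 1) m‖)
    (hsplit : ∀ j ≤ d, Summable fun m => ‖hSplitCoeff η c φ d j m‖)
    (hres : ∀ m : Fin (d + 1) → ι, η ≠ ∑ i, φ (m i)) :
    Summable fun m => ‖hCoeff η c φ (d + 1) m * (∑ i, φ (m i) : ℝ)‖ := by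
  refine .of_nonneg_of_le (fun _ => norm_nonneg _) (fun m => ?_) ((hd.mul_left ‖(η : ℂ)‖).add
    (summable_sum fun j hj => hsplit j (Finset.mem_range_succ_iff.1 hj)))
  have h : hCoeff η c φ (d + 1) m * (∑ i, φ (m i) : ℝ) = η * hCoeff η c φ (d + 1) m -
      ∑ j ∈ Finset.range (d + 1), hSplitCoeff η c φ d j m := by
    rw [← hCoeff_succ_mul_sub (hres m)]
    ring
  rw [h, ← norm_mul]
  exact (norm_sub_le _ _).trans (add_le_add le_rfl (norm_sum_le _ _))

end HCoeff

namespace IsWaveFamily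

variable {ι : Type*} {φ : ι → ℝ} {a : ℝ} {p : ℕ} {M D : ℝ≥0} {f b : ι → ℝ → ℂ} {η : ℝ}
  {c : ι → ℂ}

lemma homSeries_hSplitCoeff (h : IsWaveFamily φ a p M D f b) (hc : Summable fun k => ‖c k‖)
    {d j : ℕ} (hjd : j ≤ d) (hj : Summable fun m => ‖hCoeff η c φ j m‖)
    (hdj : Summable fun m => ‖hCoeff η c φ (d - j) m‖) (x : ℝ) :
    homSeries f (hSplitCoeff η c φ d j) x = homSeries f (hCoeff η c φ j) x *
      homSeries f (hCoeff η c φ (d - j)) x * homSeries f (fun m : Fin 1 → ι => c (m 0)) x := by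
  obtain ⟨n, rfl⟩ := Nat.exists_eq_add_of_le hjd
  rw [Nat.add_sub_cancel_left] at hdj ⊢
  rw [hSplitCoeff_add, homSeries_mul (h.summable_norm hj x) (h.summable_norm hdj x),
    homSeries_mul (h.summable_norm (summable_norm_appendCoeff hj hdj) x)
      (h.summable_norm (summable_norm_comp_apply_zero hc) x)]

lemma homSeries_hCoeff_mul_sum (h : IsWaveFamily φ a p M D f b) (hc : Summable fun k => ‖c k‖)
    {d : ℕ} (hA : ∀ j ≤ d + 1, Summable fun m => ‖hCoeff η c φ j m‖)
    (hres : ∀ m : Fin (d + 1) → ι, η ≠ ∑ i, φ (m i)) (x : ℝ) :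
    homSeries f (fun m => hCoeff η c φ (d + 1) m * (∑ i, φ (m i) : ℝ)) x =
      η * homSeries f (hCoeff η c φ (d + 1)) x -
        (∑ j ∈ Finset.range (d + 1), homSeries f (hCoeff η c φ j) x *
          homSeries f (hCoeff η c φ (d - j)) x) *
          homSeries f (fun m : Fin 1 → ι => c (m 0)) x := by
  have hs : ∀ j ∈ Finset.range (d + 1),
      Summable fun m => hSplitCoeff η c φ d j m * ∏ i, f (m i) x := fun j hj => by
    have hjd := Finset.mem_range_succ_iff.1 hj
    exact (h.summable_norm (summable_norm_hSplitCoeff hc hjd (hA j (by omega))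
      (hA (d - j) (by omega))) x).of_norm
  have hterm : ∀ m, hCoeff η c φ (d + 1) m * (∑ i, φ (m i) : ℝ) * ∏ i, f (m i) x =
      η * (hCoeff η c φ (d + 1) m * ∏ i, f (m i) x) -
        ∑ j ∈ Finset.range (d + 1), hSplitCoeff η c φ d j m * ∏ i, f (m i) x := fun m => by
    rw [← Finset.sum_mul, ← hCoeff_succ_mul_sub (hres m)]
    ring
  rw [homSeries, tsum_congr hterm, Summable.tsum_sub, tsum_mul_left, Summable.tsum_finsetSum hs,
    Finset.sum_mul]
  · congr 1
    refine Finset.sum_congr rfl fun j hj => ?_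
    have hjd := Finset.mem_range_succ_iff.1 hj
    exact h.homSeries_hSplitCoeff hc hjd (hA j (by omega)) (hA (d - j) (by omega)) x
  · exact (h.summable_norm (hA (d + 1) le_rfl) x).of_norm.mul_left _
  · exact summable_sum hs

lemma hasDerivAt_homSeries_hCoeff (h : IsWaveFamily φ a p M D f b)
    (hc : Summable fun k => ‖c k‖) {d : ℕ}
    (hA : ∀ j ≤ d + 1, Summable fun m => ‖hCoeff η c φ j m‖)
    (hres : ∀ m : Fin (d + 1) → ι, η ≠ ∑ i, φ (m i)) (x : ℝ) :
    HasDerivAt (homSeries f (hCoeff η c φ (d + 1)))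
      (-Complex.I * η * homSeries f (hCoeff η c φ (d + 1)) x +
        Complex.I * homSeries f (fun m : Fin 1 → ι => c (m 0)) x *
          ∑ j ∈ Finset.range (d + 1),
            homSeries f (hCoeff η c φ j) x * homSeries f (hCoeff η c φ (d - j)) x +
        homSeriesDeriv f b (hCoeff η c φ (d + 1)) x) x := by
  have hsplit : ∀ j ≤ d, Summable fun m => ‖hSplitCoeff η c φ d j m‖ := fun j hj =>
    summable_norm_hSplitCoeff hc hj (hA j (by omega)) (hA (d - j) (by omega))
  refine (h.hasDerivAt_homSeries (hA (d + 1) le_rfl)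
    (summable_norm_hCoeff_mul_sum (hA (d + 1) le_rfl) hsplit hres) x).congr_deriv ?_
  rw [h.homSeries_hCoeff_mul_sum hc hA hres]
  ring

end IsWaveFamily

lemma sum_range_mul_sum_range {R : Type*} [NonUnitalNonAssocSemiring R] (a b : ℕ → R) {N p : ℕ}
    (hN : N ≤ p) :
    (∑ j ∈ Finset.range p, a j) * ∑ n ∈ Finset.range p, b n =
      (∑ d ∈ Finset.range N, ∑ j ∈ Finset.range (d + 1), a j * b (d - j)) +
        ∑ z ∈ Finset.range p ×ˢ Finset.range p with N ≤ z.1 + z.2, a z.1 * b z.2 := by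
  rw [Finset.sum_mul_sum, ← Finset.sum_product',
    ← Finset.sum_filter_add_sum_filter_not _ (fun z : ℕ × ℕ => N ≤ z.1 + z.2), add_comm,
    Finset.sum_sigma']
  congr 1
  refine Finset.sum_nbij' (fun z => ⟨z.1 + z.2, z.1⟩) (fun y => (y.2, y.1 - y.2)) ?_ ?_ ?_ ?_ ?_
  · rintro ⟨j, n⟩ h
    simp only [Finset.mem_filter, Finset.mem_product, Finset.mem_range, Finset.mem_sigma] at h ⊢
    omega
  · rintro ⟨d, j⟩ h
    simp only [Finset.mem_filter, Finset.mem_product, Finset.mem_range, Finset.mem_sigma] at h ⊢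
    omega
  · rintro ⟨j, n⟩ -
    simp
  · rintro ⟨d, j⟩ h
    simp only [Finset.mem_range, Finset.mem_sigma] at h
    simp [show j + (d - j) = d by omega]
  · rintro ⟨j, n⟩ -
    simp

section HSeries

variable {ι : Type*} {φ : ι → ℝ} {a : ℝ} {f b : ι → ℝ → ℂ} {η : ℝ} {c : ι → ℂ} {N : ℕ}

/-- The truncation at degree `N` of the formal solution `Q` of the Riccati equation
`Q' = -iη(Q - 1) + ivQ²` with `v = ∑ c_k f_k`. -/
noncomputable def hSeries (η : ℝ) (c : ι → ℂ) (φ : ι → ℝ) (f : ι → ℝ → ℂ) (N : ℕ) (x : ℝ) : ℂ :=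
  ∑ j ∈ Finset.range (N + 1), homSeries f (hCoeff η c φ j) x

/-- The error with which `hSeries` solves its Riccati equation: the remainders `b` of the waves `f`,
and the terms of degree greater than `N` in `ivQ²`. -/
noncomputable def hSeriesError (η : ℝ) (c : ι → ℂ) (φ : ι → ℝ) (f b : ι → ℝ → ℂ) (N : ℕ) (x : ℝ) :
    ℂ :=
  ∑ d ∈ Finset.range N, homSeriesDeriv f b (hCoeff η c φ (d + 1)) x -
    Complex.I * ∑ z ∈ Finset.range (N + 1) ×ˢ Finset.range (N + 1) with N ≤ z.1 + z.2,
      homSeries f (hCoeff η c φ z.1) x * homSeries f (hCoeff η c φ z.2) x *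
        homSeries f (fun m : Fin 1 → ι => c (m 0)) x

lemma hSeries_eq_sum_succ_add_one (x : ℝ) :
    hSeries η c φ f N x = ∑ d ∈ Finset.range N, homSeries f (hCoeff η c φ (d + 1)) x + 1 := by
  rw [hSeries, Finset.sum_range_succ', homSeries_zero, hCoeff_zero]

namespace IsWaveFamily

variable {p : ℕ} {M D : ℝ≥0}

lemma tendsto_hSeries (h : IsWaveFamily φ a p M D f b)
    (hA : ∀ j ≤ N, Summable fun m => ‖hCoeff η c φ j m‖) :
    Tendsto (hSeries η c φ f N) atTop (𝓝 1) := by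
  rw [funext hSeries_eq_sum_succ_add_one]
  simpa using (tendsto_finsetSum (Finset.range N) fun d hd => h.tendsto_homSeries
    (Nat.succ_pos d) (hA (d + 1) (Finset.mem_range.1 hd))).add_const 1

lemma continuous_hSeriesError (h : IsWaveFamily φ a p M D f b) (hc : Summable fun k => ‖c k‖)
    (hA : ∀ j ≤ N, Summable fun m => ‖hCoeff η c φ j m‖) :
    Continuous (hSeriesError η c φ f b N) := by
  refine (continuous_finsetSum _ fun d hd => ?_).sub
    (continuous_const.mul (continuous_finsetSum _ fun z hz => ?_))
  · exact h.continuous_homSeriesDeriv (hA (d + 1) (Finset.mem_range.1 hd))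
  · simp only [Finset.mem_filter, Finset.mem_product, Finset.mem_range_succ_iff] at hz
    exact ((h.continuous_homSeries (hA _ hz.1.1)).mul (h.continuous_homSeries (hA _ hz.1.2))).mul
      (h.continuous_homSeries (summable_norm_comp_apply_zero hc))

lemma integrableOn_hSeriesError [Countable ι] (h : IsWaveFamily φ a (N + 1) M D f b)
    (hc : Summable fun k => ‖c k‖) (hA : ∀ j ≤ N, Summable fun m => ‖hCoeff η c φ j m‖) :
    IntegrableOn (hSeriesError η c φ f b N) (Ioi a) := by
  refine Integrable.sub (integrable_finsetSum _ fun d hd => ?_)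
    ((integrable_finsetSum _ fun z hz => ?_).const_mul _)
  · exact h.integrableOn_homSeriesDeriv (hA (d + 1) (Finset.mem_range.1 hd))
  · simp only [Finset.mem_filter, Finset.mem_product, Finset.mem_range_succ_iff] at hz
    have hfst := hA _ hz.1.1
    have hsnd : Summable fun m => ‖hCoeff η c φ (z.1 + z.2 - z.1) m‖ := by
      rw [Nat.add_sub_cancel_left]
      exact hA _ hz.1.2
    refine (h.integrableOn_homSeries (Nat.succ_pos N) (Nat.succ_le_succ hz.2)
      (summable_norm_hSplitCoeff hc (Nat.le_add_right _ _) hfst hsnd)).congr_fun (fun x _ => ?_)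
      measurableSet_Ioi
    rw [h.homSeries_hSplitCoeff hc (Nat.le_add_right _ _) hfst hsnd, Nat.add_sub_cancel_left]

lemma hasDerivAt_hSeries (h : IsWaveFamily φ a p M D f b) (hc : Summable fun k => ‖c k‖)
    (hA : ∀ j ≤ N, Summable fun m => ‖hCoeff η c φ j m‖)
    (hres : ∀ d < N, ∀ m : Fin (d + 1) → ι, η ≠ ∑ i, φ (m i)) (x : ℝ) :
    HasDerivAt (hSeries η c φ f N) (-Complex.I * η * (hSeries η c φ f N x - 1) +
      Complex.I * homSeries f (fun m : Fin 1 → ι => c (m 0)) x * hSeries η c φ f N x ^ 2 +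
      hSeriesError η c φ f b N x) x := by
  have hderiv := (HasDerivAt.fun_sum fun d hd => h.hasDerivAt_homSeries_hCoeff hc
    (fun j hj => hA j (hj.trans (Finset.mem_range.1 hd))) (hres d (Finset.mem_range.1 hd)) x
      ).add_const (1 : ℂ)
  rw [← funext hSeries_eq_sum_succ_add_one] at hderiv
  have hsq : hSeries η c φ f N x ^ 2 = _ :=
    (sq _).trans (sum_range_mul_sum_range _ _ (Nat.le_succ N))
  have hsub : hSeries η c φ f N x - 1 =
      ∑ d ∈ Finset.range N, homSeries f (hCoeff η c φ (d + 1)) x := by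
    rw [hSeries_eq_sum_succ_add_one, add_sub_cancel_right]
  refine hderiv.congr_deriv ?_
  rw [hsq, hsub]
  simp only [hSeriesError, Finset.sum_add_distrib, ← Finset.mul_sum, ← Finset.sum_mul]
  ring

end IsWaveFamily

end HSeries

section RiccatiSubstitution

variable {η : ℝ} {Q : ℝ → ℂ}

lemma tendsto_im_riccatiSubstitution (hlim : Tendsto Q atTop (𝓝 1)) :
    Tendsto (fun x => (Complex.I * η / 2 * (2 / Q x - 1)).im) atTop (𝓝 (η / 2)) := by
  have h := (Complex.continuous_im.tendsto _).comp
    (((tendsto_const_nhds (x := (2 : ℂ)).div hlim one_ne_zero).sub_const 1).const_mul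
      (Complex.I * η / 2))
  have hval : Complex.I * η / 2 * (2 / 1 - 1) = (η / 2 : ℝ) * Complex.I := by
    push_cast
    ring
  rwa [hval, Complex.im_ofReal_mul, Complex.I_im, mul_one] at h

lemma norm_riccatiSubstitution_residual_le (hη : 0 < η) {V ρ : ℝ} {q q' : ℂ}
    (hq : 1 / 2 ≤ ‖q‖)
    (hρ : ‖q' - (-Complex.I * η * (q - 1) + Complex.I * (V / η) * q ^ 2)‖ ≤ ρ) :
    ‖-Complex.I * η * q' / q ^ 2 + (Complex.I * η / 2 * (2 / q - 1)) ^ 2 -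
      (V - η ^ 2 / 4 : ℝ)‖ ≤ 4 * η * ρ := by
  have hq0 : q ≠ 0 := norm_pos_iff.1 (one_half_pos.trans_le hq)
  have hη0 : (η : ℂ) ≠ 0 := mod_cast hη.ne'
  have heq : -Complex.I * η * q' / q ^ 2 + (Complex.I * η / 2 * (2 / q - 1)) ^ 2 -
      (V - η ^ 2 / 4 : ℝ) = -Complex.I * η *
        (q' - (-Complex.I * η * (q - 1) + Complex.I * (V / η) * q ^ 2)) / q ^ 2 := by
    push_cast
    field_simp
    ring_nf
    simp only [Complex.I_sq]
    ring
  have hρ0 : 0 ≤ ρ := (norm_nonneg _).trans hρ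
  rw [heq, norm_div, norm_mul, norm_mul, norm_neg, Complex.norm_I, one_mul, norm_pow,
    Complex.norm_real, Real.norm_of_nonneg hη.le, div_le_iff₀ (by positivity)]
  calc _ ≤ η * ρ := by gcongr
    _ = 4 * η * ρ * (1 / 2) ^ 2 := by ring
    _ ≤ 4 * η * ρ * ‖q‖ ^ 2 := by gcongr

lemma exists_isApproxRiccatiSolution_of_tendsto_one {X₀ : ℝ} (hη : 0 < η) {V ρ : ℝ → ℝ} {Q' : ℝ → ℂ}
    (hQ : ∀ x, HasDerivAt Q (Q' x) x) (hQ' : Continuous Q') (hlim : Tendsto Q atTop (𝓝 1))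
    (hρ : ∀ᶠ x in atTop,
      ‖Q' x - (-Complex.I * η * (Q x - 1) + Complex.I * (V x / η) * Q x ^ 2)‖ ≤ ρ x) :
    ∃ X ≥ X₀, ∃ w w', IsApproxRiccatiSolution (fun x => V x - η ^ 2 / 4)
      (fun x => 4 * η * ρ x) (η / 4) (Ici X) w w' := by
  obtain ⟨X, hX⟩ := eventually_atTop.1 ((eventually_ge_atTop X₀).and (hρ.and
    (((tendsto_im_riccatiSubstitution hlim).eventually
      (eventually_ge_nhds (show η / 4 < η / 2 by linarith))).and
    (hlim.norm.eventually (eventually_ge_nhds (show (1 / 2 : ℝ) < ‖(1 : ℂ)‖ by norm_num))))))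
  have hQ0 : ∀ x ∈ Ici X, Q x ≠ 0 := fun x hx =>
    norm_pos_iff.1 (one_half_pos.trans_le (hX x hx).2.2.2)
  refine ⟨X, (hX X le_rfl).1, fun x => Complex.I * η / 2 * (2 / Q x - 1),
    fun x => -Complex.I * η * Q' x / Q x ^ 2, fun x hx => ?_, ?_, fun x hx => (hX x hx).2.2.1,
    fun x hx => norm_riccatiSubstitution_residual_le hη (hX x hx).2.2.2 (hX x hx).2.1⟩
  · refine ((((hasDerivAt_const x (2 : ℂ)).div (hQ x) (hQ0 x hx)).sub_const 1).const_mul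
      (Complex.I * η / 2)).congr_deriv ?_
    ring
  · have hQc : Continuous Q := continuous_iff_continuousAt.2 fun x => (hQ x).continuousAt
    exact (by fun_prop : Continuous fun x => -Complex.I * η * Q' x).continuousOn.div
      (hQc.pow 2).continuousOn fun x hx => pow_ne_zero 2 (hQ0 x hx)

end RiccatiSubstitution

section WaveConstruction

lemma exists_forall_norm_le_one {α ι E : Type*} [MeasurableSpace α] {μ : Measure α}
    [SeminormedAddCommGroup E] {S : Set α} {γ : ι → α → E} {p : ℕ} (hS : MeasurableSet S)
    (hμS : μ S = ⊤) (hγ : ∫⁻ x in S, (⨆ k, ‖γ k x‖ₑ) ^ p ∂μ < ⊤) :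
    ∃ x ∈ S, ∀ k, ‖γ k x‖ ≤ 1 := by
  by_contra! hcon
  refine hγ.not_ge ?_
  calc (⊤ : ℝ≥0∞) = ∫⁻ _ in S, 1 ∂μ := by rw [setLIntegral_one, hμS]
    _ ≤ _ := setLIntegral_mono' hS fun x hx => by
      obtain ⟨k, hk⟩ := hcon x hx
      refine one_le_pow₀ (le_iSup_of_le k ?_)
      exact (ENNReal.one_le_ofReal.2 hk.le).trans_eq (ofReal_norm _)

lemma tendsto_zero_of_hasDerivAt_of_integrableOn_norm_pow {E : Type*} [NormedAddCommGroup E]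
    [NormedSpace ℝ E] [CompleteSpace E] {g g' : ℝ → E} {a : ℝ} {p : ℕ}
    (hg : ∀ x ∈ Ioi a, HasDerivAt g (g' x) x) (hg' : IntegrableOn g' (Ioi a))
    (hp : IntegrableOn (fun x => ‖g x‖ ^ p) (Ioi a)) : Tendsto g atTop (𝓝 0) := by
  have hlim := tendsto_limUnder_of_hasDerivAt_of_integrableOn_Ioi hg hg'
  have hzero : ‖limUnder atTop g‖ ^ p = 0 := by
    refine IntegrableAtFilter.eq_zero_of_tendsto ⟨Ioi a, Ioi_mem_atTop a, hp⟩ (fun s hs => ?_)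
      (hlim.norm.pow p)
    obtain ⟨b, hb⟩ := mem_atTop_sets.1 hs
    rw [← top_le_iff, ← Real.volume_Ici (a := b)]
    exact measure_mono hb
  rwa [norm_eq_zero.1 (eq_zero_of_pow_eq_zero hzero)] at hlim

lemma lintegral_enorm_pow_le_of_norm_sub_le {α E : Type*} [MeasurableSpace α] {μ : Measure α}
    [SeminormedAddCommGroup E] {f g : α → E} {K : ℝ≥0} {p : ℕ} (hp : 1 ≤ p)
    (hf : AEStronglyMeasurable f μ) (hfg : ∀ x, ‖f x - g x‖ ≤ K) :
    ∫⁻ x, ‖g x‖ₑ ^ p ∂μ ≤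
      2 ^ (p - 1) * (∫⁻ x, ‖f x‖ₑ ^ p ∂μ + K ^ (p - 1) * ∫⁻ x, ‖f x - g x‖ₑ ∂μ) := by
  have hle : ∀ x, ‖g x‖ₑ ^ p ≤ 2 ^ (p - 1) * (‖f x‖ₑ ^ p + K ^ (p - 1) * ‖f x - g x‖ₑ) := fun x =>
    calc ‖g x‖ₑ ^ p ≤ (‖f x‖ₑ + ‖f x - g x‖ₑ) ^ p := by
          gcongr
          simpa using enorm_sub_le (a := f x) (b := f x - g x)
      _ ≤ 2 ^ (p - 1) * (‖f x‖ₑ ^ p + ‖f x - g x‖ₑ ^ p) := by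
          simp only [enorm_eq_nnnorm]
          exact_mod_cast add_pow_le (zero_le : 0 ≤ ‖f x‖₊) zero_le p
      _ ≤ _ := by
          rw [← Nat.sub_add_cancel hp, pow_succ ‖f x - g x‖ₑ, Nat.add_sub_cancel]
          gcongr
          exact enorm_le_coe.2 (hfg x)
  refine (lintegral_mono hle).trans_eq ?_
  rw [lintegral_const_mul' _ _ (by simp), lintegral_add_left' (hf.enorm.pow_const p),
    lintegral_const_mul' _ _ (by simp)]

lemma exists_smoothing_Ici {E : Type*} [NormedAddCommGroup E] [NormedSpace ℝ E] [CompleteSpace E]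
    {f : ℝ → E} {a : ℝ} {p : ℕ} {W M L : ℝ≥0} (hp : 1 ≤ p) (hf : eVariationOn f (Ici a) ≤ W)
    (hM : ∀ x ∈ Ici a, ‖f x‖ ≤ M) (hL : ∫⁻ x in Ioi a, ‖f x‖ₑ ^ p ≤ L) :
    ∃ g g' : ℝ → E, (∀ x, HasDerivAt g (g' x) x) ∧ Continuous g' ∧ (∀ x, ‖g x‖ ≤ M) ∧
      (∀ x, ‖g' x‖ ≤ W) ∧ Tendsto g atTop (𝓝 0) ∧
      ∫⁻ x in Ioi a, ‖g x‖ₑ ^ p ≤ 2 ^ (p - 1) * (L + (2 * M) ^ (p - 1) * (2 * W)) ∧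
      ∫⁻ x in Ioi a, ‖g' x‖ₑ ≤ 2 * W ∧
      AEStronglyMeasurable f (volume.restrict (Ioi a)) ∧ ∫⁻ x in Ioi a, ‖f x - g x‖ₑ ≤ 2 * W := by
  have hext : eVariationOn (fun x => f (max x a)) univ ≤ W :=
    (eVariationOn.comp_le_of_monotoneOn f (fun x => max x a)
      (fun x _ y _ hxy => max_le_max_right a hxy) fun x _ => le_max_right x a).trans hf
  have heq : EqOn (fun x => f (max x a)) f (Ioi a) := fun x hx => by
    simp only [max_eq_left (mem_Ioi.1 hx).le]
  obtain ⟨g, g', hg, hg', hgM, hg'W, hg'int, hgint⟩ :=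
    exists_smoothing hext fun x => hM _ (le_max_right x a)
  have hgc : Continuous g := continuous_iff_continuousAt.2 fun x => (hg x).continuousAt
  have hfm := (stronglyMeasurable_of_eVariationOn_le hext).aestronglyMeasurable
    (μ := volume.restrict (Ioi a))
  have hg'i : ∫⁻ x in Ioi a, ‖g' x‖ₑ ≤ 2 * W := (setLIntegral_le_lintegral _ _).trans hg'int
  have hfg := (setLIntegral_le_lintegral (Ioi a) _).trans hgint
  have hpow : ∫⁻ x in Ioi a, ‖g x‖ₑ ^ p ≤
      2 ^ (p - 1) * (L + (2 * M) ^ (p - 1) * (2 * W)) := by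
    refine (lintegral_enorm_pow_le_of_norm_sub_le (K := 2 * M) hp hfm fun x => ?_).trans ?_
    · push_cast
      linarith [norm_sub_le (f (max x a)) (g x), hM _ (le_max_right x a), hgM x]
    · push_cast
      gcongr
      exact (setLIntegral_congr_fun measurableSet_Ioi fun x hx => by
        simp only [max_eq_left (mem_Ioi.1 hx).le]).trans_le hL
  refine ⟨g, g', hg, hg', hgM, hg'W, ?_, hpow, hg'i, ?_, ?_⟩
  · refine tendsto_zero_of_hasDerivAt_of_integrableOn_norm_pow (fun x _ => hg x)
      ⟨hg'.aestronglyMeasurable, hg'i.trans_lt (by finiteness)⟩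
      ⟨(hgc.norm.pow p).aestronglyMeasurable, ?_⟩
    simp only [HasFiniteIntegral, enorm_pow, enorm_norm]
    exact hpow.trans_lt (by finiteness)
  · exact hfm.congr (ae_restrict_of_forall_mem measurableSet_Ioi heq)
  · refine (setLIntegral_congr_fun measurableSet_Ioi fun x hx => ?_).trans_le hfg
    simp only [max_eq_left (mem_Ioi.1 hx).le]

lemma norm_exp_neg_I_mul_mul (s x : ℝ) (z : ℂ) : ‖Complex.exp (-Complex.I * s * x) * z‖ = ‖z‖ := by
  simp [Complex.norm_exp]

lemma enorm_exp_neg_I_mul_mul (s x : ℝ) (z : ℂ) :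
    ‖Complex.exp (-Complex.I * s * x) * z‖ₑ = ‖z‖ₑ :=
  enorm_eq_iff_norm_eq.2 (norm_exp_neg_I_mul_mul s x z)

lemma hasDerivAt_exp_neg_I_mul_mul (s : ℝ) {g : ℝ → ℂ} {g' : ℂ} {x : ℝ} (hg : HasDerivAt g g' x) :
    HasDerivAt (fun x : ℝ => Complex.exp (-Complex.I * s * x) * g x)
      (-Complex.I * s * (Complex.exp (-Complex.I * s * x) * g x) +
        Complex.exp (-Complex.I * s * x) * g') x := by
  have hlin : HasDerivAt (fun x : ℝ => -Complex.I * s * x) (-Complex.I * s) x := by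
    simpa using (hasDerivAt_id x).ofReal_comp.const_mul (-Complex.I * s)
  exact (hlin.cexp.mul hg).congr_deriv (by ring)

lemma exists_isWaveFamily {ι : Type*} (φ : ι → ℝ) {γ : ι → ℝ → ℂ} {a : ℝ} {p : ℕ} {W M L : ℝ≥0}
    (hp : 1 ≤ p) (hW : ∀ k, eVariationOn (γ k) (Ici a) ≤ W) (hM : ∀ k, ∀ x ∈ Ici a, ‖γ k x‖ ≤ M)
    (hL : ∀ k, ∫⁻ x in Ioi a, ‖γ k x‖ₑ ^ p ≤ L) :
    ∃ (M' D : ℝ≥0) (f b : ι → ℝ → ℂ), IsWaveFamily φ a p M' D f b ∧ ∀ k,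
      AEStronglyMeasurable (fun x : ℝ => Complex.exp (-Complex.I * φ k * x) * γ k x - f k x)
        (volume.restrict (Ioi a)) ∧
      ∫⁻ x in Ioi a, ‖Complex.exp (-Complex.I * φ k * x) * γ k x - f k x‖ₑ ≤ D := by
  choose g g' hg hg' hgM hg'W hg0 hgp hg'i hγ hγg using fun k =>
    exists_smoothing_Ici hp (hW k) (hM k) (hL k)
  have hc : ∀ k, Continuous fun x : ℝ => Complex.exp (-Complex.I * φ k * x) := fun k => by fun_prop
  have hgc : ∀ k, Continuous (g k) := fun k =>
    continuous_iff_continuousAt.2 fun x => (hg k x).continuousAt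
  refine ⟨max M W, max (2 ^ (p - 1) * (L + (2 * M) ^ (p - 1) * (2 * W))) (2 * W),
    fun k x => Complex.exp (-Complex.I * φ k * x) * g k x,
    fun k x => Complex.exp (-Complex.I * φ k * x) * g' k x,
    ⟨fun k x => ?_, fun k => (hc k).mul (hg' k), fun k x => ?_, fun k x => ?_, fun k => ?_,
      fun k => ?_, fun k => ?_⟩, fun k => ⟨?_, ?_⟩⟩
  · exact hasDerivAt_exp_neg_I_mul_mul (φ k) (hg k x)
  · exact (norm_exp_neg_I_mul_mul _ _ _).trans_le ((hgM k x).trans (le_max_left _ _))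
  · exact (norm_exp_neg_I_mul_mul _ _ _).trans_le ((hg'W k x).trans (le_max_right _ _))
  · rw [tendsto_zero_iff_norm_tendsto_zero]
    simpa only [norm_exp_neg_I_mul_mul, norm_zero] using (hg0 k).norm
  · simp only [enorm_exp_neg_I_mul_mul]
    exact (hgp k).trans (by simp)
  · simp only [enorm_exp_neg_I_mul_mul]
    exact (hg'i k).trans (by simp)
  · exact ((hc k).aestronglyMeasurable.mul (hγ k)).sub
      ((hc k).mul (hgc k)).aestronglyMeasurable
  · simp only [← mul_sub, enorm_exp_neg_I_mul_mul]
    exact (hγg k).trans (by simp)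

end WaveConstruction

lemma isApproxRiccatiSolution_const {η K : ℝ} {V : ℝ → ℝ} {S : Set ℝ} (hK : ∀ x ∈ S, |V x| ≤ K) :
    IsApproxRiccatiSolution (fun x => V x - η ^ 2 / 4) (fun _ => K) (η / 2) S
      (fun _ => (η / 2 : ℝ) * Complex.I) fun _ => 0 where
  hasDerivAt x _ := hasDerivAt_const x _
  continuousOn_deriv := continuousOn_const
  le_im x _ := by simp
  norm_le x hx := by
    have heq : (0 : ℂ) + ((η / 2 : ℝ) * Complex.I) ^ 2 - (V x - η ^ 2 / 4 : ℝ) = (-V x : ℝ) := by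
      rw [mul_pow, Complex.I_sq]
      push_cast
      ring
    rw [heq, Complex.norm_real, Real.norm_eq_abs, abs_neg]
    exact hK x hx

section Boundedness

variable {ι : Type*} {η : ℝ} {c : ι → ℂ} {φ : ι → ℝ} {V : ℝ → ℝ}

lemma IsWaveFamily.exists_isApproxRiccatiSolution [Countable ι] {a : ℝ} {M D : ℝ≥0}
    {f b : ι → ℝ → ℂ} {N : ℕ} (h : IsWaveFamily φ a (N + 1) M D f b) (hη : 0 < η)
    (hc : Summable fun k => ‖c k‖) (hA : ∀ j ≤ N, Summable fun m => ‖hCoeff η c φ j m‖)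
    (hres : ∀ d < N, ∀ m : Fin (d + 1) → ι, η ≠ ∑ i, φ (m i))
    (hV : IntegrableOn (fun x => V x / η - homSeries f (fun m : Fin 1 → ι => c (m 0)) x) (Ioi a)) :
    ∃ X > a, ∃ κ w w', IsApproxRiccatiSolution (fun x => V x - η ^ 2 / 4) κ (η / 4) (Ici X) w w' ∧
      IntegrableOn κ (Ici X) := by
  set v := homSeries f (fun m : Fin 1 → ι => c (m 0))
  set Q := hSeries η c φ f N
  set e := hSeriesError η c φ f b N
  have hQ : ∀ x, HasDerivAt Q (-Complex.I * η * (Q x - 1) + Complex.I * v x * Q x ^ 2 + e x) x :=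
    h.hasDerivAt_hSeries hc hA hres
  have hQc : Continuous Q := continuous_iff_continuousAt.2 fun x => (hQ x).continuousAt
  have hvc : Continuous v := h.continuous_homSeries (summable_norm_comp_apply_zero hc)
  have hec : Continuous e := h.continuous_hSeriesError hc hA
  have hlim : Tendsto Q atTop (𝓝 1) := h.tendsto_hSeries hA
  have hρ : ∀ᶠ x in atTop, ‖-Complex.I * η * (Q x - 1) + Complex.I * v x * Q x ^ 2 + e x -
      (-Complex.I * η * (Q x - 1) + Complex.I * (V x / η) * Q x ^ 2)‖ ≤
        ‖e x‖ + ‖V x / η - v x‖ * 2 ^ 2 := by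
    filter_upwards [hlim.norm.eventually_le_const (show ‖(1 : ℂ)‖ < 2 by norm_num)] with x hx
    calc _ = ‖e x - Complex.I * ((V x / η - v x) * Q x ^ 2)‖ := by ring_nf
      _ ≤ ‖e x‖ + ‖V x / η - v x‖ * ‖Q x‖ ^ 2 := (norm_sub_le _ _).trans_eq (by simp)
      _ ≤ _ := by gcongr
  obtain ⟨X, hX, w, w', hw⟩ :=
    exists_isApproxRiccatiSolution_of_tendsto_one (X₀ := a + 1) hη hQ (by fun_prop) hlim hρ
  have haX : a < X := (lt_add_one a).trans_le hX
  refine ⟨X, haX, _, w, w', hw, ?_⟩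
  have hκ : IntegrableOn (fun x => 4 * η * (‖e x‖ + ‖V x / η - v x‖ * 2 ^ 2)) (Ioi a) :=
    ((h.integrableOn_hSeriesError hc hA).norm.add (hV.norm.mul_const _)).const_mul _
  exact hκ.mono_set (Ici_subset_Ioi.2 haX)

lemma summable_norm_hCoeff_div {j : ℕ} (hη : 0 < η) (hsd : 1 ≤ j →
      Summable fun m : Fin j → ι => ‖∏ i, c (m i)‖ * |hFun j η (zeroPad (φ ∘ m))|) :
    Summable fun m => ‖hCoeff η (fun k => c k / η) φ j m‖ := by
  rcases Nat.eq_zero_or_pos j with rfl | hj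
  · exact .of_finite
  · refine ((hsd hj).mul_right (η ^ j)⁻¹).congr fun m => ?_
    simp only [hCoeff, Finset.prod_div_distrib, Finset.prod_const, Finset.card_univ,
      Fintype.card_fin, norm_mul, norm_div, norm_pow, Complex.norm_real, Real.norm_eq_abs,
      abs_of_pos hη]
    ring

lemma integrableOn_tsum_sub_homSeries [Countable ι] {A : ι → ℂ} {F f : ι → ℝ → ℂ} {S : Set ℝ}
    {K M D : ℝ≥0} (hS : MeasurableSet S) (hA : Summable fun k => ‖A k‖)
    (hF : ∀ k, ∀ x ∈ S, ‖F k x‖ ≤ K) (hf : ∀ k x, ‖f k x‖ ≤ M)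
    (hm : ∀ k, AEStronglyMeasurable (fun x => F k x - f k x) (volume.restrict S))
    (hD : ∀ k, ∫⁻ x in S, ‖F k x - f k x‖ₑ ≤ D) :
    IntegrableOn (fun x => ∑' k, A k * F k x - homSeries f (fun m : Fin 1 → ι => A (m 0)) x) S := by
  have hsum : ∀ {B : ℝ≥0} {z : ι → ℂ}, (∀ k, ‖z k‖ ≤ B) → Summable fun k => A k * z k :=
    fun {B} _ hz => .of_norm_bounded (hA.mul_right (B : ℝ)) fun k => (norm_mul_le _ _).trans <|
      mul_le_mul_of_nonneg_left (hz k) (norm_nonneg _)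
  refine IntegrableOn.congr_fun (integrable_tsum_mul_of_lintegral_enorm_le hA hm hD)
    (fun x hx => ?_) hS
  simp only [mul_sub, homSeries_one]
  exact (hsum fun k => hF k x hx).tsum_sub (hsum fun k => hf k x)

lemma exists_isApproxRiccatiSolution_of_tsum [Countable ι] {γ : ι → ℝ → ℂ} {a : ℝ} {p : ℕ}
    {W M L : ℝ≥0} (hp : 1 ≤ p) (hη : 0 < η)
    (hV : ∀ x ∈ Ioi a, (V x : ℂ) = ∑' k, c k * Complex.exp (-Complex.I * φ k * x) * γ k x)
    (hW : ∀ k, eVariationOn (γ k) (Ici a) ≤ W) (hM : ∀ k, ∀ x ∈ Ici a, ‖γ k x‖ ≤ M)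
    (hL : ∀ k, ∫⁻ x in Ioi a, ‖γ k x‖ₑ ^ p ≤ L) (hc : Summable fun k => ‖c k‖)
    (hsd : ∀ j, 1 ≤ j → j < p →
      Summable fun m : Fin j → ι => ‖∏ i, c (m i)‖ * |hFun j η (zeroPad (φ ∘ m))|)
    (hres : ∀ j, 1 ≤ j → j < p → ∀ m : Fin j → ι, η ≠ ∑ i, φ (m i)) :
    ∃ X > a, ∃ κ w w', IsApproxRiccatiSolution (fun x => V x - η ^ 2 / 4) κ (η / 4) (Ici X) w w' ∧
      IntegrableOn κ (Ici X) := by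
  obtain ⟨N, rfl⟩ : ∃ N, p = N + 1 := ⟨p - 1, by omega⟩
  obtain ⟨M', D, f, b, hf, hfγ⟩ := exists_isWaveFamily φ hp hW hM hL
  have hcη : Summable fun k => ‖c k / η‖ := by simpa only [norm_div] using hc.div_const ‖(η : ℂ)‖
  have hVη : ∀ x ∈ Ioi a,
      ∑' k, c k / η * (Complex.exp (-Complex.I * φ k * x) * γ k x) = V x / η := fun x hx => by
    rw [hV x hx, ← tsum_div_const]
    exact tsum_congr fun k => by ring
  refine hf.exists_isApproxRiccatiSolution (c := fun k => c k / η) hη hcη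
    (fun j hj => summable_norm_hCoeff_div hη fun hj1 => hsd j hj1 (Nat.lt_succ_of_le hj))
    (fun d hd => hres (d + 1) (Nat.succ_pos d) (Nat.succ_lt_succ hd)) ?_
  refine (integrableOn_tsum_sub_homSeries (K := M) measurableSet_Ioi hcη (fun k x hx => ?_)
    hf.norm_le (fun k => (hfγ k).1) fun k => (hfγ k).2).congr_fun (fun x hx => ?_)
    measurableSet_Ioi
  · rw [norm_exp_neg_I_mul_mul]
    exact hM k x (Ioi_subset_Ici_self hx)
  · simp only [hVη x hx]

lemma abs_le_of_eq_tsum {γ : ι → ℂ} {v x M : ℝ}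
    (hv : (v : ℂ) = ∑' k, c k * Complex.exp (-Complex.I * φ k * x) * γ k)
    (hc : Summable fun k => ‖c k‖) (hM : ∀ k, ‖γ k‖ ≤ M) : |v| ≤ (∑' k, ‖c k‖) * M := by
  rw [← Real.norm_eq_abs, ← Complex.norm_real, hv]
  refine tsum_of_norm_bounded (hc.hasSum.mul_right M) fun k => ?_
  rw [mul_assoc, norm_mul, norm_exp_neg_I_mul_mul]
  gcongr
  exact hM k

theorem stmt2_general [Countable ι] {p : ℕ} (hp : 1 ≤ p) (hη : 0 < η) {γ : ι → ℝ → ℂ}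
    (hV : ∀ x ∈ Ioi (0 : ℝ),
      (V x : ℂ) = ∑' k, c k * Complex.exp (-Complex.I * (φ k) * x) * γ k x)
    (hBV : ⨆ k, eVariationOn (γ k) (Ioi 0) < ⊤)
    (hLp : ∫⁻ x in Ioi (0 : ℝ), (⨆ k, ‖γ k x‖ₑ) ^ p < ⊤)
    (hc : Summable fun k => ‖c k‖)
    (hsd : ∀ j, 1 ≤ j → j < p →
      Summable fun m : Fin j → ι => ‖∏ i, c (m i)‖ * |hFun j η (zeroPad (φ ∘ m))|)
    (hres : ∀ j, 1 ≤ j → j < p → ∀ m : Fin j → ι, η ≠ ∑ i, φ (m i))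
    {u u' : ℝ → ℂ} (hu : IsWeakSolution V (η ^ 2 / 4) u u') :
    ∃ C : ℝ, ∀ x ∈ Ioi (0 : ℝ), ‖u x‖ ≤ C := by
  obtain ⟨W, hW⟩ : ∃ W : ℝ≥0, W = ⨆ k, eVariationOn (γ k) (Ioi 0) :=
    ⟨_, ENNReal.coe_toNNReal hBV.ne⟩
  obtain ⟨L, hL⟩ : ∃ L : ℝ≥0, L = ∫⁻ x in Ioi (0 : ℝ), (⨆ k, ‖γ k x‖ₑ) ^ p :=
    ⟨_, ENNReal.coe_toNNReal hLp.ne⟩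
  have hγW : ∀ k, eVariationOn (γ k) (Ioi 0) ≤ W := fun k =>
    (le_iSup (fun k => eVariationOn (γ k) (Ioi 0)) k).trans_eq hW.symm
  have hγL : ∀ k, ∫⁻ x in Ioi (1 : ℝ), ‖γ k x‖ₑ ^ p ≤ L := fun k => by
    rw [hL]
    refine (lintegral_mono_set (Ioi_subset_Ioi zero_le_one)).trans (lintegral_mono fun x => ?_)
    gcongr
    exact le_iSup (fun k => ‖γ k x‖ₑ) k
  obtain ⟨y, hy, hy1⟩ := exists_forall_norm_le_one measurableSet_Ioi Real.volume_Ioi hLp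
  have hγM : ∀ k, ∀ x ∈ Ioi (0 : ℝ), ‖γ k x‖ ≤ (1 + W : ℝ≥0) := fun k x hx =>
    (norm_le_norm_add_of_eVariationOn_le (hγW k) hx hy).trans
      (by push_cast; gcongr; exact hy1 k)
  have hsub : Ici (1 : ℝ) ⊆ Ioi 0 := Ici_subset_Ioi.2 one_pos
  obtain ⟨X, hX, κ, w, w', hw, hκ⟩ := exists_isApproxRiccatiSolution_of_tsum hp hη
    (fun x hx => hV x (hsub (Ioi_subset_Ici_self hx)))
    (fun k => (eVariationOn.mono _ hsub).trans (hγW k)) (fun k x hx => hγM k x (hsub hx)) hγL hc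
    hsd hres
  have hX0 : 0 < X := one_pos.trans hX
  obtain ⟨C₁, hC₁⟩ := hu.exists_norm_le hw (by positivity) ordConnected_Ici
    (Ici_subset_Ioi.2 hX0) hκ
  obtain ⟨C₀, hC₀⟩ := hu.exists_norm_le (isApproxRiccatiSolution_const (S := Ioc 0 X)
    fun x hx => abs_le_of_eq_tsum (hV x hx.1) hc fun k => hγM k x hx.1) (by positivity)
    ordConnected_Ioc Ioc_subset_Ioi_self
    (integrableOn_const measure_Ioc_lt_top.ne)
  refine ⟨max C₀ C₁, fun x hx => ?_⟩
  rcases le_total x X with hxX | hxX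
  · exact (hC₀ x ⟨hx, hxX⟩).trans (le_max_left _ _)
  · exact (hC₁ x hxX).trans (le_max_right _ _)

end Boundedness

theorem stmt2 (p : ℕ) (hp : 2 ≤ p) (η : ℝ) (hη : 0 < η)
    (c : ℕ → ℂ) (φ : ℕ → ℝ) (γ : ℕ → ℝ → ℂ)
    (V : ℝ → ℝ)
    (hV : ∀ x ∈ Set.Ioi (0:ℝ),
      (V x : ℂ) = ∑' k, c k * Complex.exp (-Complex.I * (φ k) * x) * γ k x)
    -- (i) uniformly bounded variation
    (hBV : ⨆ k, eVariationOn (γ k) (Set.Ioi 0) < ⊤)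
    -- (ii) uniform L^p condition
    (hLp : ∫⁻ x in Set.Ioi (0:ℝ), (⨆ k, (‖γ k x‖₊ : ℝ≥0∞)) ^ p < ⊤)
    -- (iii) decay of coefficients
    (hc : Summable fun k => ‖c k‖)
    -- (iv) small divisor conditions
    (hsd : ∀ j : ℕ, 1 ≤ j → j ≤ p - 1 →
      Summable fun m : Fin j → ℕ => ‖∏ i, c (m i)‖ * |hFun j η (padFin j φ m)|)
    -- (v) nonresonance
    (hres : ∀ K J : ℕ, 1 ≤ K → K ≤ J → J ≤ p → ∀ (m : Fin J → ℕ) (ε : Fin J → ℝ),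
      (∀ i, ε i = 1 ∨ ε i = -1) → (K : ℝ) * η ≠ ∑ i, ε i * φ (m i))
    -- (vi) closure under complex conjugation
    (hinv : ∃ star : ℕ → ℕ, Function.Involutive star ∧
      (∀ k, c (star k) = starRingEnd ℂ (c k)) ∧
      (∀ k, φ (star k) = -φ k) ∧
      (∀ k, ∀ x ∈ Set.Ioi (0:ℝ), γ (star k) x = starRingEnd ℂ (γ k x))) :
    ∀ u u' : ℝ → ℂ, IsWeakSolution V (η ^ 2 / 4) u u' →
      ∃ C : ℝ, ∀ x ∈ Set.Ioi (0:ℝ), ‖u x‖ ≤ C := by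
  intro u u' hu
  exact stmt2_general (by omega) hη hV hBV hLp hc (fun j hj hjp => hsd j hj (by omega))
    (fun j hj hjp m => by
      simpa using hres 1 j le_rfl hj (by omega) m (fun _ => 1) fun _ => .inl rfl) hu
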